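/- Let G = (V,E) be a network with source s and sink t such that G is connected as a graph. For each n ≥ 1, let m_n denote the number of labelings α of G attaining the minimum of H_G^{(n)}. Then there exists a Borel probability measure μ on ℝ, whose support is a compact subset of [0, +∞), such that ∫ t^n dμ(t) = m_n for every n ≥ 1. -/

import Mathlib

/-!
**Minimizers are monotone labelings.** Write `|σ|` for the Cayley length. For every labeling `α`
the Hamiltonian is at least the total variation of the integer potential `x ↦ |α x|`, which by the
coarea inequality (`IsMinCut.coarea`) is at least the size of a minimum cut times `|γ| = n - 1`;
labeling a minimum cut by `γ` and the rest by `1` attains this. So `α` is a minimizer iff the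
potential `|α|` is optimal and every edge joins permutations comparable in the absolute order
`AbsLe`. The optimal potentials form a cone in which gradients never have opposite signs, so there
is a generic one, `f`, whose gradient dominates the others (`IsMinCut.exists_generic`). It follows
that the minimizers are exactly the labelings that increase, for `AbsLe`, along every edge on which
`f` does not decrease (`IsMinCut.minimizer_iff`). This relation does not depend on `n`. Vertices
below `s` or above `t` have forced labels, and as `G` is connected all the others are below `t`
(`IsMinCut.reflTransGen`); hence `m_n` counts the families of elements of the interval `[1, γ]`
that are increasing along a fixed relation `R` on a fixed finite set `U`
(`ncard_monotone_labelings`).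

**Noncrossing permutations are Dyck paths.** After conjugation `γ` is `finRotate n`. Elements below
it correspond to Dyck paths of length `2n` (`arcPath`), and the absolute order between them is
refinement of cycle partitions (`absLe_iff_sameCycle`, proved by linear algebra on the spaces of
vectors constant on cycles), which can be read off from the paths (`refines_arcPath_iff`).

**Families of Dyck paths are closed walks.** An `R`-increasing family of Dyck paths is a closed walk
of length `2n` in a graph of states: a state records the current heights and, for the blocks on the
stack, which block of the larger path contains them (`ncard_dyck_families`). Containments are
created and forgotten in a way that is symmetric under time reversal, so the graph is undirected,
and its degrees are at most `2 ^ |U|`.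

**Closed walks are moments.** The number of closed walks of length `2n` at a vertex `o` is the
`n`-th moment of the image under `x ↦ x²` of the spectral measure at `o` of the adjacency operator,
a probability measure on `[0, 4 ^ |U|]`. It is obtained as a weak limit point of the spectral
measures of finite balls (`walk_moments`).
-/

/-- The number of cycles of a permutation of `Fin n`, counting fixed points as cycles. -/
def cycleCount {n : ℕ} (σ : Equiv.Perm (Fin n)) : ℕ :=
  σ.cycleType.card + (n - σ.support.card)

/-- The Cayley length `|σ| = n - c(σ)` of a permutation of `Fin n`. -/
def cayleyLength {n : ℕ} (σ : Equiv.Perm (Fin n)) : ℕ := n - cycleCount σ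

/-- The Cayley distance `d(σ, τ) = n - c(σ⁻¹ τ)` on `S_n`. -/
def cayleyDist {n : ℕ} (σ τ : Equiv.Perm (Fin n)) : ℕ := cayleyLength (σ⁻¹ * τ)

lemma cayleyDist_comm {n : ℕ} (σ τ : Equiv.Perm (Fin n)) :
    cayleyDist σ τ = cayleyDist τ σ := by
  unfold cayleyDist cayleyLength cycleCount
  rw [show τ⁻¹ * σ = (σ⁻¹ * τ)⁻¹ by group]
  rw [Equiv.Perm.cycleType_inv, Equiv.Perm.support_inv]

/-- The contribution `d(α x, α y)` of an (undirected) edge `{x, y}` to the Hamiltonian. -/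
def edgeTerm {V : Type*} {n : ℕ} (α : V → Equiv.Perm (Fin n)) : Sym2 V → ℕ :=
  Sym2.lift ⟨fun x y => cayleyDist (α x) (α y), fun _ _ => cayleyDist_comm _ _⟩

/-- The Hamiltonian `H_G^{(n)}(α) = Σ_{{x,y} ∈ E} d(α x, α y)` of a labeling of the
vertices of a graph by permutations. -/
noncomputable def hamiltonian {V : Type*} (G : SimpleGraph V) {n : ℕ}
    (α : V → Equiv.Perm (Fin n)) : ℕ :=
  ∑ᶠ e ∈ G.edgeSet, edgeTerm α e

/-- `maxflow G s t` is the maximum cardinality of a collection of pairwise edge-disjoint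
paths from `s` to `t` in `G`. -/
noncomputable def maxflow {V : Type*} (G : SimpleGraph V) (s t : V) : ℕ :=
  sSup {k | ∃ π : Fin k → G.Walk s t, (∀ i, (π i).IsPath) ∧
    ∀ i j, i ≠ j → List.Disjoint (π i).edges (π j).edges}

/-! ### Closed walks in a graph of bounded degree are moments -/

section WalkMoments

open MeasureTheory Filter Topology

/-- Every diagonal entry of the powers of a real symmetric matrix is a moment of a finitely
supported probability measure carried by the spectrum. -/
lemma spectral_weights {T : Type*} [Fintype T] [DecidableEq T] (M : Matrix T T ℝ)
    (hM : M.IsHermitian) (d : ℕ) (hd : ∀ k, ∑ j, |M k j| ≤ d) (o : T) :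
    ∃ (l w : T → ℝ), (∀ i, |l i| ≤ d) ∧ (∀ i, 0 ≤ w i) ∧
      ∀ n, (M ^ n) o o = ∑ i, w i * l i ^ n := by
  refine ⟨hM.eigenvalues, fun i => (hM.eigenvectorUnitary : Matrix T T ℝ) o i ^ 2, ?_, ?_, ?_⟩
  · intro i
    have h1 : Module.End.HasEigenvalue (Matrix.toLin' M) (hM.eigenvalues i) := by
      apply Module.End.hasEigenvalue_of_hasEigenvector (x := ⇑(hM.eigenvectorBasis i))
      rw [Module.End.hasEigenvector_iff, Module.End.mem_eigenspace_iff]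
      refine ⟨?_, (WithLp.ofLp_eq_zero 2).ne.2 <| hM.eigenvectorBasis.orthonormal.ne_zero i⟩
      rw [Matrix.toLin'_apply]
      exact hM.mulVec_eigenvectorBasis i
    obtain ⟨k, hk⟩ := eigenvalue_mem_ball h1
    rw [Metric.mem_closedBall, Real.dist_eq] at hk
    have h2 := Finset.add_sum_erase Finset.univ (fun j => |M k j|) (Finset.mem_univ k)
    have h3 := hd k
    simp only [Real.norm_eq_abs] at hk
    have h4 := abs_sub_abs_le_abs_sub (hM.eigenvalues i) (M k k)
    linarith
  · intro i; positivity
  · intro n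
    conv_lhs => rw [hM.spectral_theorem, ← map_pow, Matrix.diagonal_pow,
      Unitary.conjStarAlgAut_apply]
    rw [Matrix.mul_apply]
    refine Finset.sum_congr rfl fun i _ => ?_
    rw [Matrix.mul_diagonal, Matrix.star_apply]
    simp
    ring

variable {S : Type*}

/-- The number of walks of length `n` from `o` to a given vertex, in the graph in which
`nb σ` is the set of neighbours of `σ`. -/
noncomputable def walkNum (nb : S → Finset S) (o : S) : ℕ → S → ℕ
  | 0 => fun τ => by classical exact if τ = o then 1 else 0
  | n + 1 => fun τ => ∑ σ ∈ nb τ, walkNum nb o n σ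

/-- A finite set of vertices containing all those reached from `o` in at most `n` steps. -/
noncomputable def walkBall (nb : S → Finset S) (o : S) : ℕ → Finset S
  | 0 => {o}
  | n + 1 => by classical exact walkBall nb o n ∪ (walkBall nb o n).biUnion nb

lemma walkBall_mono (nb : S → Finset S) (o : S) : Monotone (walkBall nb o) := by
  classical
  apply monotone_nat_of_le_succ
  intro n
  rw [walkBall]
  exact Finset.subset_union_left

lemma walkNum_eq_zero (nb : S → Finset S) (hsymm : ∀ σ τ, τ ∈ nb σ → σ ∈ nb τ) (o : S)
    (n : ℕ) : ∀ τ, τ ∉ walkBall nb o n → walkNum nb o n τ = 0 := by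
  classical
  induction n with
  | zero => intro τ h; simp only [walkBall, Finset.mem_singleton] at h; simp [walkNum, h]
  | succ n ih =>
    intro τ h
    simp only [walkBall, Finset.mem_union, Finset.mem_biUnion, not_or, not_exists, not_and] at h
    rw [walkNum]
    refine Finset.sum_eq_zero fun σ hσ => ih σ fun hb => h.2 σ hb (hsymm _ _ hσ)

/-- The closed walks of even length at a vertex of a locally finite graph with degrees at most
`d` are counted by the moments of a probability measure on `[0, d²]`. The measure is a limit
point of the spectral measures (pushed forward by squaring) of finite pieces of the graph. -/
theorem walk_moments (nb : S → Finset S) (hsymm : ∀ σ τ, τ ∈ nb σ → σ ∈ nb τ) (o : S) (d : ℕ)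
    (hd : ∀ σ, (nb σ).card ≤ d) :
    ∃ μ : Measure ℝ, IsProbabilityMeasure μ ∧ μ (Set.Icc 0 ((d : ℝ) ^ 2))ᶜ = 0 ∧
      ∀ n : ℕ, ∫ x, x ^ n ∂μ = (walkNum nb o (2 * n) o : ℝ) := by
  classical
  let X : Type := Set.Icc (0 : ℝ) ((d : ℝ) ^ 2)
  -- finite truncations match the first moments
  have key : ∀ N : ℕ, ∃ μ : ProbabilityMeasure X, ∀ n : ℕ, 2 * n ≤ N →
      ∫ x, (x : ℝ) ^ n ∂(μ : Measure X) = (walkNum nb o (2 * n) o : ℝ) := by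
    intro N
    let T : Type _ := walkBall nb o N
    have ho : o ∈ walkBall nb o N :=
      walkBall_mono nb o (Nat.zero_le N) (by simp [walkBall])
    let o' : T := ⟨o, ho⟩
    let M : Matrix T T ℝ := fun σ τ => if τ.1 ∈ nb σ.1 then 1 else 0
    have hM : M.IsHermitian := by
      ext σ τ
      simp only [M]
      exact if_congr ⟨hsymm _ _, hsymm _ _⟩ rfl rfl
    have hrow : ∀ k, ∑ j, |M k j| ≤ (d : ℝ) := by
      intro k
      have h1 : ∑ j, |M k j| = ∑ j : T, if j.1 ∈ nb k.1 then (1 : ℝ) else 0 := by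
        refine Finset.sum_congr rfl fun j _ => ?_
        simp only [M]; split_ifs <;> simp
      rw [h1, Finset.sum_boole]
      have h2 : (Finset.univ.filter fun j : T => j.1 ∈ nb k.1).card ≤ (nb k.1).card := by
        apply Finset.card_le_card_of_injOn (fun j => j.1)
        · intro j hj; simpa using hj
        · intro a _ b _ h; exact Subtype.ext h
      exact_mod_cast h2.trans (hd _)
    have hpow : ∀ j ≤ N, ∀ τ : T, (M ^ j) τ o' = (walkNum nb o j τ.1 : ℝ) := by
      intro j
      induction j with
      | zero =>
        intro _ τ
        have : (τ = o') ↔ τ.1 = o := Subtype.ext_iff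
        simp [walkNum, Matrix.one_apply, this]
      | succ j ih =>
        intro hj τ
        rw [pow_succ', Matrix.mul_apply, walkNum]
        push_cast
        have h1 : ∀ x : T, M τ x * (M ^ j) x o' =
            (fun y : S => if y ∈ nb τ.1 then (walkNum nb o j y : ℝ) else 0) x.1 := by
          intro x
          rw [ih (by omega)]
          simp only [M]; split_ifs <;> simp
        rw [Finset.sum_congr rfl fun x _ => h1 x,
          Finset.sum_coe_sort (walkBall nb o N)
            (fun y : S => if y ∈ nb τ.1 then (walkNum nb o j y : ℝ) else 0),
          ← Finset.sum_filter]
        apply Finset.sum_subset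
        · intro y hy; exact (Finset.mem_filter.1 hy).2
        · intro y hy hy'
          have : y ∉ walkBall nb o j := fun h =>
            hy' (Finset.mem_filter.2 ⟨walkBall_mono nb o (by omega : j ≤ N) h, hy⟩)
          rw [walkNum_eq_zero nb hsymm o j y this]; simp
    obtain ⟨l, w, hl, hw, hsum⟩ := spectral_weights M hM d hrow o'
    have hmem : ∀ i, l i ^ 2 ∈ Set.Icc (0 : ℝ) ((d : ℝ) ^ 2) := fun i =>
      ⟨sq_nonneg _, sq_le_sq' (by linarith [(abs_le.1 (hl i)).1]) (abs_le.1 (hl i)).2⟩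
    let p : T → X := fun i => ⟨l i ^ 2, hmem i⟩
    let ν : Measure X := ∑ i, ENNReal.ofReal (w i) • Measure.dirac (p i)
    have hw1 : ∑ i, w i = 1 := by
      have := hsum 0
      simpa using this.symm
    have hν : IsProbabilityMeasure ν := by
      constructor
      simp only [ν, Measure.coe_finsetSum, Finset.sum_apply, Measure.smul_apply,
        measure_univ, smul_eq_mul, mul_one]
      rw [← ENNReal.ofReal_sum_of_nonneg (fun i _ => hw i), hw1, ENNReal.ofReal_one]
    refine ⟨⟨ν, hν⟩, fun n hn => ?_⟩
    change ∫ x, (x : ℝ) ^ n ∂ν = _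
    have hint : ∀ i, Integrable (fun x : X => (x : ℝ) ^ n)
        (ENNReal.ofReal (w i) • Measure.dirac (p i)) := fun i =>
      (integrable_dirac (by simp)).smul_measure ENNReal.ofReal_ne_top
    rw [integral_finsetSum_measure fun i _ => hint i, ← hpow _ hn o', hsum]
    refine Finset.sum_congr rfl fun i _ => ?_
    rw [integral_smul_measure, integral_dirac, ENNReal.toReal_ofReal (hw i), smul_eq_mul,
      pow_mul]
  choose μs hμs using key
  let U : Ultrafilter ℕ := Ultrafilter.of atTop
  have hU : (U : Filter ℕ) ≤ atTop := Ultrafilter.of_le atTop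
  obtain ⟨μ, -, hμ⟩ := isCompact_univ.ultrafilter_le_nhds (U.map μs) (by simp)
  have hμ' : Tendsto μs U (𝓝 μ) := hμ
  rw [ProbabilityMeasure.tendsto_iff_forall_integral_tendsto] at hμ'
  refine ⟨Measure.map (Subtype.val : X → ℝ) (μ : Measure X), ?_, ?_, ?_⟩
  · exact Measure.isProbabilityMeasure_map measurable_subtype_coe.aemeasurable
  · rw [Measure.map_apply measurable_subtype_coe measurableSet_Icc.compl]
    have : (Subtype.val : X → ℝ) ⁻¹' (Set.Icc 0 ((d : ℝ) ^ 2))ᶜ = ∅ := by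
      ext x; simp
    rw [this, measure_empty]
  · intro n
    rw [integral_map measurable_subtype_coe.aemeasurable (by fun_prop)]
    let f : C(X, ℝ) := ⟨fun x => (Subtype.val x) ^ n, continuous_subtype_val.pow n⟩
    have h1 := hμ' (BoundedContinuousFunction.mkOfCompact f)
    have h2 : Tendsto (fun i ↦ ∫ x, (BoundedContinuousFunction.mkOfCompact f) x ∂(μs i : Measure X))
        U (𝓝 (walkNum nb o (2 * n) o : ℝ)) := by
      apply tendsto_const_nhds.congr'
      filter_upwards [hU (eventually_ge_atTop (2 * n))] with i hi
      exact (hμs i n hi).symm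
    exact tendsto_nhds_unique h1 h2

end WalkMoments

/-! ### Refining families of Dyck paths are closed walks -/

section WalkSet

variable {S : Type*}

/-- The walks of length `n` from `o` to a given vertex, as sequences that are constant from
time `n` on. -/
noncomputable def walkSet (nb : S → Finset S) (o : S) : ℕ → S → Finset (ℕ → S)
  | 0 => fun τ => by classical exact if τ = o then {fun _ => o} else ∅
  | n + 1 => fun τ => by
      classical exact (nb τ).biUnion fun σ =>
        (walkSet nb o n σ).image fun w j => if j ≤ n then w j else τ

lemma mem_walkSet (nb : S → Finset S) (o : S) (n : ℕ) : ∀ (τ : S) (w : ℕ → S),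
    w ∈ walkSet nb o n τ ↔
      w 0 = o ∧ (∀ j < n, w j ∈ nb (w (j + 1))) ∧ ∀ j, n ≤ j → w j = τ := by
  classical
  induction n with
  | zero =>
    intro τ w
    simp only [walkSet]
    constructor
    · intro h
      split_ifs at h with h1
      · rw [Finset.mem_singleton] at h
        subst h; subst h1; simp
      · simp at h
    · rintro ⟨h0, -, h2⟩
      have h3 : τ = o := by rw [← h0, h2 0 le_rfl]
      rw [if_pos h3, Finset.mem_singleton]
      funext j
      rw [h2 j (Nat.zero_le j), h3]
  | succ n ih =>
    intro τ w
    simp only [walkSet, Finset.mem_biUnion, Finset.mem_image]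
    constructor
    · rintro ⟨σ, hσ, v, hv, rfl⟩
      rw [ih] at hv
      obtain ⟨h0, h1, h2⟩ := hv
      refine ⟨by simpa using h0, fun j hj => ?_, fun j hj => ?_⟩
      · rcases Nat.lt_or_ge j n with h | h
        · have := h1 j h
          simpa [Nat.le_of_lt h, Nat.succ_le_of_lt h] using this
        · have : j = n := by omega
          subst this
          simpa [h2 j le_rfl] using hσ
      · have : ¬ j ≤ n := by omega
        simp [this]
    · rintro ⟨h0, h1, h2⟩
      refine ⟨w n, ?_, fun j => if j ≤ n then w j else w n, ?_, ?_⟩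
      · have := h1 n (Nat.lt_succ_self n)
        rwa [h2 (n + 1) le_rfl] at this
      · rw [ih]
        refine ⟨by simpa using h0, fun j hj => ?_, fun j hj => ?_⟩
        · have := h1 j (by omega)
          simpa [Nat.le_of_lt hj, Nat.succ_le_of_lt hj] using this
        · split_ifs with h
          · rw [le_antisymm h hj]
          · rfl
      · funext j
        split_ifs with h
        · simp [h]
        · rw [h2 j (by omega)]

lemma card_walkSet (nb : S → Finset S) (o : S) (n : ℕ) : ∀ (τ : S),
    (walkSet nb o n τ).card = walkNum nb o n τ := by
  classical
  induction n with
  | zero => intro τ; simp only [walkSet, walkNum]; split_ifs <;> simp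
  | succ n ih =>
    intro τ
    simp only [walkSet, walkNum]
    rw [Finset.card_biUnion]
    · refine Finset.sum_congr rfl fun σ _ => ?_
      rw [Finset.card_image_of_injOn, ih]
      intro v hv v' hv' h
      rw [Finset.mem_coe, mem_walkSet] at hv hv'
      funext j
      rcases le_or_gt j n with hj | hj
      · have := congrFun h j
        simpa [hj] using this
      · rw [hv.2.2 j hj.le, hv'.2.2 j hj.le]
    · intro σ _ σ' _ hne
      rw [Function.onFun, Finset.disjoint_left]
      intro w hw hw'
      rw [Finset.mem_image] at hw hw'
      obtain ⟨v, hv, rfl⟩ := hw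
      obtain ⟨v', hv', h⟩ := hw'
      rw [mem_walkSet] at hv hv'
      apply hne
      have := congrFun h n
      simp only [le_refl, if_true] at this
      rw [← hv.2.2 n le_rfl, ← hv'.2.2 n le_rfl, this]

end WalkSet

/-- `H` is a Dyck path with `2n` steps, extended by zero. -/
def IsDyck (n : ℕ) (H : ℕ → ℕ) : Prop :=
  H 0 = 0 ∧ (∀ j, 2 * n ≤ j → H j = 0) ∧ ∀ j < 2 * n, H (j + 1) = H j + 1 ∨ H j = H (j + 1) + 1

/-- The points `p ≤ q` are in the same block of the noncrossing partition encoded by the Dyck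
path `H`: at the odd times `2p+1` and `2q+1` the contour `H` visits the same vertex of its
plane tree. The odd vertices of the tree are the blocks. -/
def Linked (H : ℕ → ℕ) (p q : ℕ) : Prop :=
  p ≤ q ∧ H (2 * p + 1) = H (2 * q + 1) ∧
    ∀ j, 2 * p + 1 ≤ j → j ≤ 2 * q + 1 → H (2 * p + 1) ≤ H j

/-- Refinement of the noncrossing partitions of `{0, …, n-1}` encoded by two Dyck paths. -/
def Refines (n : ℕ) (H K : ℕ → ℕ) : Prop :=
  ∀ p q, q < n → Linked H p q → Linked K p q

namespace IsDyck

variable {n : ℕ} {H : ℕ → ℕ}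

lemma parity (h : IsDyck n H) : ∀ j, j ≤ 2 * n → H j % 2 = j % 2 := by
  intro j
  induction j with
  | zero => intro _; rw [h.1]
  | succ j ih =>
    intro hj
    have h1 := ih (by omega)
    have h2 := h.2.2 j (by omega)
    omega

lemma exists_next (h : IsDyck n H) (a : ℕ) : ∀ m j, j + m = 2 * n → a ≤ H j →
    ∃ i, j ≤ i ∧ i ≤ 2 * n ∧ H i = a ∧ ∀ i', j ≤ i' → i' ≤ i → a ≤ H i' := by
  intro m
  induction m with
  | zero =>
    intro j hj ha
    have := h.2.1 j (by omega)
    exact ⟨j, le_rfl, by omega, by omega, fun i' h1 h2 => by omega⟩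
  | succ m ih =>
    intro j hj ha
    by_cases hja : H j = a
    · refine ⟨j, le_rfl, by omega, hja, fun i' h1 h2 => ?_⟩
      have : i' = j := by omega
      subst this; omega
    · have h2 := h.2.2 j (by omega)
      obtain ⟨i, h3, h4, h5, h6⟩ := ih (j + 1) (by omega) (by omega)
      refine ⟨i, by omega, h4, h5, fun i' h7 h8 => ?_⟩
      rcases Nat.eq_or_lt_of_le h7 with h9 | h9
      · rw [← h9]; exact ha
      · exact h6 i' h9 h8

end IsDyck

/-- `i` is a visit, no later than `j`, to the ancestor at height `a` of the vertex at which the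
contour `H` stands at time `j`. -/
def Vis (H : ℕ → ℕ) (j a i : ℕ) : Prop :=
  i ≤ j ∧ H i = a ∧ ∀ i', i ≤ i' → i' ≤ j → a ≤ H i'

lemma IsDyck.exists_vis {n : ℕ} {H : ℕ → ℕ} (h : IsDyck n H) (a : ℕ) :
    ∀ j, j ≤ 2 * n → a ≤ H j → ∃ i, Vis H j a i := by
  intro j
  induction j with
  | zero =>
    intro _ ha
    have := h.1
    exact ⟨0, le_rfl, by omega, fun i' _ h2 => by rw [Nat.le_zero.1 h2]; exact ha⟩
  | succ j ih =>
    intro hj ha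
    by_cases hja : H (j + 1) = a
    · refine ⟨j + 1, le_rfl, hja, fun i' h1 h2 => ?_⟩
      rw [le_antisymm h2 h1]; exact ha
    · have h2 := h.2.2 j (by omega)
      obtain ⟨i, h3, h4, h5⟩ := ih (by omega) (by omega)
      refine ⟨i, by omega, h4, fun i' h6 h7 => ?_⟩
      rcases Nat.eq_or_lt_of_le h7 with h9 | h9
      · rw [h9]; exact ha
      · exact h5 i' h6 (by omega)

section States

variable {U : Type*} (R : U → U → Prop)

/-- The states of the transfer matrix for a family of Dyck paths indexed by `U`: the current
heights of the paths, and, for each related pair `x, y` and each odd height `a` in the path `x`,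
the height in the path `y` of the vertex that contains the block at height `a` in the path `x`. -/
abbrev PState (U : Type*) : Type _ := (U → ℕ) × (U → U → ℕ → ℕ)

/-- Consistency of a state. Values `f x y a` that carry no information are `0`. -/
def PState.Valid (σ : PState U) : Prop :=
  (∀ x y a, ¬ (R x y ∧ Odd a ∧ a ≤ σ.1 x) → σ.2 x y a = 0) ∧
  (∀ x y a, R x y → Odd a → a ≤ σ.1 x → σ.2 x y a ≤ σ.1 y) ∧
  (∀ x y, R x y → Odd (σ.1 x) → σ.2 x y (σ.1 x) = σ.1 y)

/-- One time step: all heights move by one, and the containments between blocks that stay on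
the stack are kept. -/
def PState.Step (σ τ : PState U) : Prop :=
  PState.Valid R σ ∧ PState.Valid R τ ∧ (∀ x, τ.1 x = σ.1 x + 1 ∨ σ.1 x = τ.1 x + 1) ∧
  ∀ x y a, R x y → Odd a → a ≤ σ.1 x → a ≤ τ.1 x → σ.2 x y a = τ.2 x y a

variable {R}

lemma PState.Step.symm {σ τ : PState U} (h : PState.Step R σ τ) : PState.Step R τ σ :=
  ⟨h.2.1, h.1, fun x => (h.2.2.1 x).symm, fun x y a h1 h2 h3 h4 => (h.2.2.2 x y a h1 h2 h4 h3).symm⟩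

/-- The heights after a step determine the state. -/
lemma PState.Step.unique {σ τ τ' : PState U} (h : PState.Step R σ τ) (h' : PState.Step R σ τ')
    (hk : τ.1 = τ'.1) : τ = τ' := by
  refine Prod.ext hk ?_
  funext x y a
  by_cases hc : R x y ∧ Odd a ∧ a ≤ τ.1 x
  · obtain ⟨hR, ho, ha⟩ := hc
    by_cases ha' : a ≤ σ.1 x
    · rw [← h.2.2.2 x y a hR ho ha' ha, ← h'.2.2.2 x y a hR ho ha' (hk ▸ ha)]
    · have h1 := h.2.2.1 x
      have h2 : a = τ.1 x := by omega
      have h3 := h.2.1.2.2 x y hR (h2 ▸ ho)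
      have h4 := h'.2.1.2.2 x y hR (by rw [← hk]; exact h2 ▸ ho)
      rw [← hk] at h4
      rw [h2, h3, h4]
  · rw [h.2.1.1 x y a hc, h'.2.1.1 x y a (hk ▸ hc)]

lemma PState.step_injective (σ : PState U) : Function.Injective
    (fun (τ : {τ : PState U // PState.Step R σ τ}) (x : U) => decide (σ.1 x < τ.1.1 x)) := by
  intro τ τ' h
  apply Subtype.ext
  apply τ.2.unique τ'.2
  funext x
  have h1 := congrFun h x
  simp only [decide_eq_decide] at h1
  have h2 := τ.2.2.2.1 x
  have h3 := τ'.2.2.2.1 x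
  omega

variable [Fintype U]

lemma PState.finite_step (σ : PState U) : {τ : PState U | PState.Step R σ τ}.Finite := by
  classical exact Set.finite_coe_iff.1 (Finite.of_injective _ (PState.step_injective σ))

variable (R) in
/-- The neighbours of a state. -/
noncomputable def PState.nb (σ : PState U) : Finset (PState U) :=
  (PState.finite_step (R := R) σ).toFinset

lemma PState.mem_nb (σ τ : PState U) : τ ∈ PState.nb R σ ↔ PState.Step R σ τ := by
  simp [PState.nb]

lemma PState.card_nb (σ : PState U) : (PState.nb R σ).card ≤ 2 ^ Fintype.card U := by
  classical
  have h1 := Nat.card_le_card_of_injective _ (PState.step_injective (R := R) σ)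
  have h2 : Nat.card (U → Bool) = 2 ^ Fintype.card U := by simp
  rw [← h2]
  refine le_trans (le_of_eq ?_) h1
  rw [PState.nb, ← Set.ncard_eq_toFinset_card _ (PState.finite_step (R := R) σ)]
  rfl

/-- Families of Dyck paths, increasing for refinement along `R`, correspond to closed walks in
the graph of states. -/
lemma ncard_dyck_families (n : ℕ) :
    {H : U → ℕ → ℕ | (∀ x, IsDyck n (H x)) ∧ ∀ x y, R x y → Refines n (H x) (H y)}.ncard =
      walkNum (PState.nb R) (fun _ => 0, fun _ _ _ => 0) (2 * n) (fun _ => 0, fun _ _ _ => 0) := by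
  classical
  set o : PState U := (fun _ => 0, fun _ _ _ => 0) with ho
  rw [← card_walkSet, ← Set.ncard_coe_finset]
  symm
  refine Set.ncard_congr (fun w _ x j => (w j).1 x) ?_ ?_ ?_
  · intro w hw
    rw [Finset.mem_coe, mem_walkSet] at hw
    obtain ⟨h0, h1, h2⟩ := hw
    have hstep : ∀ j < 2 * n, PState.Step R (w j) (w (j + 1)) := fun j hj =>
      ((PState.mem_nb _ _).1 (h1 j hj)).symm
    have hD : ∀ x, IsDyck n (fun j => (w j).1 x) := fun x =>
      ⟨by simp [h0, ho], fun j hj => by simp [h2 j hj, ho], fun j hj => (hstep j hj).2.2.1 x⟩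
    refine ⟨hD, fun x y hR p q hq hL => ?_⟩
    obtain ⟨hpq, he, hmin⟩ := hL
    simp only at he hmin
    have hodd : ∀ r, r < n → Odd ((w (2 * r + 1)).1 x) := fun r hr => by
      have := (hD x).parity (2 * r + 1) (by omega)
      rw [Nat.odd_iff]; omega
    have hvalid : ∀ j ≤ 2 * q + 1, PState.Valid R (w j) := fun j hj => (hstep j (by omega)).1
    -- the recorded containment is constant while the block stays on the stack
    have hconst : ∀ m, 2 * p + 1 + m ≤ 2 * q + 1 →
        (w (2 * p + 1 + m)).2 x y ((w (2 * p + 1)).1 x) = (w (2 * p + 1)).1 y := by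
      intro m
      induction m with
      | zero => intro _; exact (hvalid _ (by omega)).2.2 x y hR (hodd p (by omega))
      | succ m ih =>
        intro hm
        rw [← ih (by omega)]
        exact ((hstep (2 * p + 1 + m) (by omega)).2.2.2 x y _ hR (hodd p (by omega))
          (hmin _ (by omega) (by omega)) (hmin _ (by omega) (by omega))).symm
    refine ⟨hpq, ?_, fun j hj1 hj2 => ?_⟩
    · have h3 := hconst (2 * q - 2 * p) (by omega)
      rw [show 2 * p + 1 + (2 * q - 2 * p) = 2 * q + 1 by omega, he] at h3
      simp only
      rw [← h3]
      exact (hvalid _ le_rfl).2.2 x y hR (hodd q hq)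
    · have h3 := hconst (j - (2 * p + 1)) (by omega)
      rw [show 2 * p + 1 + (j - (2 * p + 1)) = j by omega] at h3
      simp only
      rw [← h3]
      exact (hvalid j hj2).2.1 x y _ hR (hodd p (by omega)) (hmin j hj1 hj2)
  · intro w w' hw hw' h
    rw [Finset.mem_coe, mem_walkSet] at hw hw'
    have hk : ∀ j, (w j).1 = (w' j).1 := fun j => funext fun x => congrFun (congrFun h x) j
    have hlt : ∀ j ≤ 2 * n, w j = w' j := by
      intro j
      induction j with
      | zero => intro _; rw [hw.1, hw'.1]
      | succ j ih =>
        intro hj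
        have h1 := ((PState.mem_nb _ _).1 (hw.2.1 j (by omega))).symm
        have h2 := ((PState.mem_nb _ _).1 (hw'.2.1 j (by omega))).symm
        rw [← ih (by omega)] at h2
        exact h1.unique h2 (hk _)
    funext j
    rcases le_total j (2 * n) with hj | hj
    · exact hlt j hj
    · rw [hw.2.2 j hj, hw'.2.2 j hj]
  · rintro H ⟨hD, hR⟩
    -- related visits in the path `x` have the same height in the path `y`
    have hlink : ∀ x y a j i i', R x y → Odd a → j ≤ 2 * n → i ≤ i' → H x i = a →
        (∀ k, i ≤ k → k ≤ j → a ≤ H x k) → i' ≤ j → H x i' = a →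
        H y i = H y i' ∧ ∀ k, i ≤ k → k ≤ i' → H y i ≤ H y k := by
      intro x y a j i i' hxy ha hj hii hi hmin hi' hia
      rw [Nat.odd_iff] at ha
      have h1 := (hD x).parity i (by omega)
      have h2 := (hD x).parity i' (by omega)
      obtain ⟨p, rfl⟩ : ∃ p, i = 2 * p + 1 := ⟨i / 2, by omega⟩
      obtain ⟨q, rfl⟩ : ∃ q, i' = 2 * q + 1 := ⟨i' / 2, by omega⟩
      have h3 := hR x y hxy p q (by omega)
        ⟨by omega, by omega, fun k h4 h5 => by rw [hi]; exact hmin k h4 (by omega)⟩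
      exact h3.2
    let f : ℕ → U → U → ℕ → ℕ := fun j x y a =>
      if h : (R x y ∧ Odd a ∧ a ≤ H x j) ∧ ∃ i, Vis (H x) j a i then H y h.2.choose else 0
    have hf0 : ∀ j x y a, ¬ (R x y ∧ Odd a ∧ a ≤ H x j) → f j x y a = 0 := by
      intro j x y a h
      exact dif_neg fun h' => h h'.1
    have hf : ∀ j x y a i, j ≤ 2 * n → R x y → Odd a → Vis (H x) j a i → f j x y a = H y i := by
      intro j x y a i hj hxy ha hi
      have hc : (R x y ∧ Odd a ∧ a ≤ H x j) ∧ ∃ i, Vis (H x) j a i :=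
        ⟨⟨hxy, ha, hi.2.2 j hi.1 le_rfl⟩, i, hi⟩
      have h1 : f j x y a = H y hc.2.choose := dif_pos hc
      have h2 := hc.2.choose_spec
      rw [h1]
      rcases le_total i hc.2.choose with h | h
      · exact (hlink x y a j _ _ hxy ha hj h hi.2.1 hi.2.2 h2.1 h2.2.1).1.symm
      · exact (hlink x y a j _ _ hxy ha hj h h2.2.1 h2.2.2 hi.1 hi.2.1).1
    have hvalid : ∀ j ≤ 2 * n, PState.Valid R ((fun x => H x j, f j) : PState U) := by
      intro j hj
      refine ⟨fun x y a h => hf0 j x y a h, fun x y a hxy ha h => ?_, fun x y hxy ha => ?_⟩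
      · obtain ⟨i, hi⟩ := (hD x).exists_vis a j hj h
        simp only
        rw [hf j x y a i hj hxy ha hi]
        obtain ⟨i', h1, h2, h3, h4⟩ := (hD x).exists_next a (2 * n - j) j (by omega) h
        refine (hlink x y a i' i i' hxy ha h2 (hi.1.trans h1) hi.2.1 ?_ le_rfl h3).2 j hi.1 h1
        intro k h5 h6
        rcases le_total k j with h7 | h7
        · exact hi.2.2 k h5 h7
        · exact h4 k h7 h6
      · refine hf j x y (H x j) j hj hxy ha ⟨le_rfl, rfl, fun k h1 h2 => ?_⟩
        rw [le_antisymm h2 h1]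
    refine ⟨fun j => (fun x => H x j, f j), ?_, rfl⟩
    rw [Finset.mem_coe, mem_walkSet]
    have hend : ∀ j, (∀ x, H x j = 0) → ((fun x => H x j, f j) : PState U) = o := by
      intro j h
      refine Prod.ext (funext h) ?_
      funext x y a
      apply hf0
      rintro ⟨-, h1, h2⟩
      rw [h x, Nat.le_zero] at h2
      subst h2
      exact absurd h1 (by decide)
    refine ⟨hend 0 fun x => (hD x).1, fun j hj => ?_, fun j hj => hend j fun x => (hD x).2.1 j hj⟩
    rw [PState.mem_nb]
    refine PState.Step.symm ⟨hvalid j (by omega), hvalid (j + 1) (by omega),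
      fun x => (hD x).2.2 j hj, fun x y a hxy ha h1 h2 => ?_⟩
    simp only at h1 h2 ⊢
    obtain ⟨i, hi⟩ := (hD x).exists_vis a j (by omega) h1
    rw [hf j x y a i (by omega) hxy ha hi]
    refine (hf (j + 1) x y a i (by omega) hxy ha ⟨by have := hi.1; omega, hi.2.1, ?_⟩).symm
    intro k h3 h4
    rcases Nat.eq_or_lt_of_le h4 with h5 | h5
    · rw [h5]; exact h2
    · exact hi.2.2 k h3 (by omega)

end States

/-! ### The absolute order on permutations -/

section CycleCount

variable {n : ℕ}

lemma cycleCount_eq_card_quotient (σ : Equiv.Perm (Fin n)) :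
    cycleCount σ = Nat.card (Quotient (Equiv.Perm.SameCycle.setoid σ)) := by
  classical
  -- the cycle through `x`, where fixed points stand for their own trivial cycles
  let g : Fin n → Equiv.Perm (Fin n) ⊕ Fin n :=
    fun x => if x ∈ σ.support then Sum.inl (σ.cycleOf x) else Sum.inr x
  have hg : ∀ x y, g x = g y ↔ σ.SameCycle x y := by
    intro x y
    by_cases hx : x ∈ σ.support <;> by_cases hy : y ∈ σ.support
    · rw [Equiv.Perm.sameCycle_iff_cycleOf_eq_of_mem_support hx hy]
      simp only [g, if_pos hx, if_pos hy, Sum.inl.injEq]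
    · simp only [g, if_pos hx, if_neg hy, reduceCtorEq, false_iff]
      exact fun h => hy (h.mem_support_iff.1 hx)
    · simp only [g, if_neg hx, if_pos hy, reduceCtorEq, false_iff]
      exact fun h => hx (h.mem_support_iff.2 hy)
    · simp only [g, if_neg hx, if_neg hy, Sum.inr.injEq]
      rw [Equiv.Perm.notMem_support] at hx
      refine ⟨fun h => h ▸ Equiv.Perm.SameCycle.refl _ _, ?_⟩
      rintro ⟨k, rfl⟩
      exact (Function.IsFixedPt.perm_zpow hx k).symm
  have himg : Finset.univ.image g = σ.cycleFactorsFinset.disjSum σ.supportᶜ := by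
    ext z
    simp only [Finset.mem_image, Finset.mem_univ, true_and, Finset.mem_disjSum,
      Finset.mem_compl]
    constructor
    · rintro ⟨x, rfl⟩
      by_cases hx : x ∈ σ.support
      · exact Or.inl ⟨_, Equiv.Perm.cycleOf_mem_cycleFactorsFinset_iff.2 hx, (if_pos hx).symm⟩
      · exact Or.inr ⟨x, hx, (if_neg hx).symm⟩
    · rintro (⟨c, hc, rfl⟩ | ⟨x, hx, rfl⟩)
      · obtain ⟨x, hx⟩ := (Equiv.Perm.mem_cycleFactorsFinset_iff.1 hc).1.nonempty_support
        refine ⟨x, ?_⟩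
        have hx' := Equiv.Perm.mem_cycleFactorsFinset_support_le hc hx
        simp only [g, if_pos hx', Sum.inl.injEq]
        exact (Equiv.Perm.cycle_is_cycleOf hx hc).symm
      · exact ⟨x, if_neg hx⟩
  let g' : Quotient (Equiv.Perm.SameCycle.setoid σ) → Equiv.Perm (Fin n) ⊕ Fin n :=
    Quotient.lift g (fun x y h => (hg x y).2 h)
  have hinj : Function.Injective g' := by
    intro a b
    refine Quotient.inductionOn₂ a b fun x y h => ?_
    exact Quotient.sound ((hg x y).1 h)
  have himg' : Finset.univ.image g' = Finset.univ.image g := by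
    ext z
    simp only [Finset.mem_image, Finset.mem_univ, true_and]
    constructor
    · rintro ⟨a, rfl⟩
      exact Quotient.inductionOn a fun x => ⟨x, rfl⟩
    · rintro ⟨x, rfl⟩
      exact ⟨Quotient.mk _ x, rfl⟩
  rw [Nat.card_eq_fintype_card, ← Finset.card_univ, ← Finset.card_image_of_injective _ hinj,
    himg', himg, Finset.card_disjSum, Finset.card_compl, Fintype.card_fin, cycleCount,
    Equiv.Perm.cycleType_def]
  simp

/-- The vectors that are constant on the cycles of `σ`. -/
def fixSp (σ : Equiv.Perm (Fin n)) : Submodule ℚ (Fin n → ℚ) where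
  carrier := {v | ∀ i, v (σ i) = v i}
  add_mem' ha hb i := by simp [ha i, hb i]
  zero_mem' i := rfl
  smul_mem' c v hv i := by simp [hv i]

lemma mem_fixSp {σ : Equiv.Perm (Fin n)} {v : Fin n → ℚ} :
    v ∈ fixSp σ ↔ ∀ i, v (σ i) = v i := Iff.rfl

lemma eq_of_mem_fixSp {σ : Equiv.Perm (Fin n)} {v : Fin n → ℚ} (hv : v ∈ fixSp σ)
    {i j : Fin n} (h : σ.SameCycle i j) : v i = v j := by
  obtain ⟨k, rfl⟩ := h.exists_nat_pow_eq
  induction k with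
  | zero => rfl
  | succ k ih => rw [pow_succ', Equiv.Perm.mul_apply, hv]; exact ih ⟨k, by simp⟩

lemma finrank_fixSp (σ : Equiv.Perm (Fin n)) :
    Module.finrank ℚ (fixSp σ) = cycleCount σ := by
  classical
  let q : Fin n → Quotient (Equiv.Perm.SameCycle.setoid σ) := Quotient.mk _
  have hq : Function.Surjective q := Quotient.mk_surjective
  have hr : LinearMap.range (LinearMap.funLeft ℚ ℚ q) = fixSp σ := by
    ext v
    constructor
    · rintro ⟨w, rfl⟩ i
      simp only [LinearMap.funLeft_apply]
      congr 1
      exact Quotient.sound (Equiv.Perm.SameCycle.refl σ i).apply_left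
    · intro hv
      refine ⟨Quotient.lift v fun a b h => eq_of_mem_fixSp hv h, ?_⟩
      funext i
      rfl
  rw [← hr, LinearMap.finrank_range_of_inj (LinearMap.funLeft_injective_of_surjective ℚ ℚ q hq),
    Module.finrank_fintype_fun_eq_card, cycleCount_eq_card_quotient, Nat.card_eq_fintype_card]

lemma cycleCount_le (σ : Equiv.Perm (Fin n)) : cycleCount σ ≤ n := by
  rw [← finrank_fixSp]
  simpa using Submodule.finrank_le (fixSp σ)

lemma cayleyLength_add_cycleCount (σ : Equiv.Perm (Fin n)) :
    cayleyLength σ + cycleCount σ = n :=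
  Nat.sub_add_cancel (cycleCount_le σ)

lemma fixSp_inf_le (σ τ : Equiv.Perm (Fin n)) : fixSp σ ⊓ fixSp τ ≤ fixSp (σ * τ) := by
  rintro v ⟨h1, h2⟩ i
  rw [Equiv.Perm.mul_apply, h1, h2]

lemma cycleCount_add_le (σ τ : Equiv.Perm (Fin n)) :
    cycleCount σ + cycleCount τ ≤ n + Module.finrank ℚ ↥(fixSp σ ⊓ fixSp τ) := by
  have h := Submodule.finrank_sup_add_finrank_inf_eq (fixSp σ) (fixSp τ)
  have h2 : Module.finrank ℚ ↥(fixSp σ ⊔ fixSp τ) ≤ n := by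
    simpa using Submodule.finrank_le (fixSp σ ⊔ fixSp τ)
  rw [finrank_fixSp, finrank_fixSp] at h
  omega

lemma cycleCount_mul (σ τ : Equiv.Perm (Fin n)) :
    cycleCount σ + cycleCount τ ≤ n + cycleCount (σ * τ) := by
  have h := cycleCount_add_le σ τ
  have h3 := Submodule.finrank_mono (fixSp_inf_le σ τ)
  rw [finrank_fixSp] at h3
  omega

lemma cayleyLength_mul_le (σ τ : Equiv.Perm (Fin n)) :
    cayleyLength (σ * τ) ≤ cayleyLength σ + cayleyLength τ := by
  have := cycleCount_mul σ τ
  have := cayleyLength_add_cycleCount σ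
  have := cayleyLength_add_cycleCount τ
  have := cayleyLength_add_cycleCount (σ * τ)
  omega

/-- The absolute order: `σ` lies on a geodesic from `1` to `τ` in the Cayley graph. -/
def AbsLe (σ τ : Equiv.Perm (Fin n)) : Prop :=
  cayleyLength σ + cayleyLength (σ⁻¹ * τ) = cayleyLength τ

lemma absLe_iff (σ τ : Equiv.Perm (Fin n)) :
    AbsLe σ τ ↔ cycleCount σ + cycleCount (σ⁻¹ * τ) = n + cycleCount τ := by
  have := cayleyLength_add_cycleCount σ
  have := cayleyLength_add_cycleCount τ
  have := cayleyLength_add_cycleCount (σ⁻¹ * τ)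
  unfold AbsLe
  omega

/-- Equality in the triangle inequality forces equality of dimensions. -/
lemma AbsLe.fixSp_eq {σ τ : Equiv.Perm (Fin n)} (h : AbsLe σ τ) :
    fixSp σ ⊓ fixSp (σ⁻¹ * τ) = fixSp τ := by
  rw [absLe_iff] at h
  have h1 := cycleCount_add_le σ (σ⁻¹ * τ)
  have h2 := fixSp_inf_le σ (σ⁻¹ * τ)
  rw [mul_inv_cancel_left] at h2
  refine Submodule.eq_of_le_of_finrank_le h2 ?_
  rw [finrank_fixSp]
  omega

lemma AbsLe.fixSp_le {σ τ : Equiv.Perm (Fin n)} (h : AbsLe σ τ) : fixSp τ ≤ fixSp σ :=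
  h.fixSp_eq ▸ inf_le_left

lemma AbsLe.fixSp_le_inv_mul {σ τ : Equiv.Perm (Fin n)} (h : AbsLe σ τ) :
    fixSp τ ≤ fixSp (σ⁻¹ * τ) :=
  h.fixSp_eq ▸ inf_le_right

lemma fixSp_le_iff {σ τ : Equiv.Perm (Fin n)} :
    fixSp τ ≤ fixSp σ ↔ ∀ i, τ.SameCycle i (σ i) := by
  classical
  constructor
  · intro h i
    have h1 : (fun j => if τ.SameCycle i j then (1 : ℚ) else 0) ∈ fixSp τ := by
      intro j
      simp
    have h2 := h h1 i
    simp only [Equiv.Perm.SameCycle.refl, if_true] at h2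
    by_contra h3
    simp [h3] at h2
  · intro h v hv i
    exact (eq_of_mem_fixSp hv (h i)).symm

lemma fixSp_le_iff' {σ τ : Equiv.Perm (Fin n)} :
    fixSp τ ≤ fixSp σ ↔ ∀ i j, σ.SameCycle i j → τ.SameCycle i j := by
  rw [fixSp_le_iff]
  constructor
  · intro h i j hij
    obtain ⟨k, rfl⟩ := hij.exists_nat_pow_eq
    clear hij
    induction k with
    | zero => exact Equiv.Perm.SameCycle.refl _ _
    | succ k ih =>
      rw [pow_succ', Equiv.Perm.mul_apply]
      exact ih.trans (h _)
  · intro h i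
    exact h _ _ (Equiv.Perm.SameCycle.refl σ i).apply_right

/-- The operator `v ↦ v ∘ σ⁻¹ - v`, whose kernel is `fixSp σ`. -/
def movOp (σ : Equiv.Perm (Fin n)) : (Fin n → ℚ) →ₗ[ℚ] (Fin n → ℚ) :=
  LinearMap.funLeft ℚ ℚ (σ⁻¹ : Equiv.Perm (Fin n)) - LinearMap.id

lemma movOp_apply (σ : Equiv.Perm (Fin n)) (v : Fin n → ℚ) (i : Fin n) :
    movOp σ v i = v (σ⁻¹ i) - v i := rfl

lemma ker_movOp (σ : Equiv.Perm (Fin n)) : LinearMap.ker (movOp σ) = fixSp σ := by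
  ext v
  rw [LinearMap.mem_ker, mem_fixSp]
  constructor
  · intro h i
    have := congrFun h (σ i)
    rw [movOp_apply] at this
    simp at this
    linarith
  · intro h
    funext i
    have := h (σ⁻¹ i)
    rw [movOp_apply]
    simp at this
    simp [this]

lemma finrank_range_movOp (σ : Equiv.Perm (Fin n)) :
    Module.finrank ℚ (LinearMap.range (movOp σ)) = cayleyLength σ := by
  have h := LinearMap.finrank_range_add_finrank_ker (movOp σ)
  rw [ker_movOp, finrank_fixSp] at h
  have := cayleyLength_add_cycleCount σ
  simp at h
  omega

/-- The two operators agree exactly on the vectors fixed by `σ⁻¹ τ`. -/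
lemma movOp_eq_iff (σ τ : Equiv.Perm (Fin n)) (v : Fin n → ℚ) :
    movOp σ v = movOp τ v ↔ v ∈ fixSp (σ⁻¹ * τ) := by
  constructor
  · intro h i
    have := congrFun h (τ i)
    simp only [movOp_apply] at this
    simp at this
    simpa using this
  · intro h
    funext i
    have := h (τ⁻¹ i)
    simp only [movOp_apply]
    simp at this
    simp [this]

lemma movOp_single (σ : Equiv.Perm (Fin n)) (i : Fin n) :
    movOp σ (Pi.single i 1) = Pi.single (σ i) 1 - Pi.single i 1 := by
  classical
  funext j
  rw [movOp_apply]
  simp only [Pi.sub_apply, Pi.single_apply]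
  simp only [Equiv.Perm.inv_eq_iff_eq]

lemma range_movOp_le {σ τ : Equiv.Perm (Fin n)} (h : fixSp τ ≤ fixSp σ) :
    LinearMap.range (movOp σ) ≤ LinearMap.range (movOp τ) := by
  classical
  have key : ∀ k : ℕ, ∀ i : Fin n, (Pi.single ((τ ^ k) i) 1 - Pi.single i 1 : Fin n → ℚ) ∈
      LinearMap.range (movOp τ) := by
    intro k i
    induction k with
    | zero => simp
    | succ k ih =>
      have h1 : movOp τ (Pi.single ((τ ^ k) i) 1) ∈ LinearMap.range (movOp τ) :=
        LinearMap.mem_range_self _ _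
      rw [movOp_single] at h1
      have := Submodule.add_mem _ h1 ih
      rw [pow_succ', Equiv.Perm.mul_apply]
      simpa using this
  rintro _ ⟨v, rfl⟩
  rw [pi_eq_sum_univ' v, map_sum]
  refine Submodule.sum_mem _ fun i _ => ?_
  rw [map_smul]
  refine Submodule.smul_mem _ _ ?_
  obtain ⟨k, hk⟩ := (fixSp_le_iff.1 h i).exists_nat_pow_eq
  have h2 := key k i
  rw [hk, ← movOp_single] at h2
  convert h2 using 2

lemma finrank_fixSp_inf (σ : Equiv.Perm (Fin n)) (W : Submodule ℚ (Fin n → ℚ)) :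
    Module.finrank ℚ (W.map (movOp σ)) + Module.finrank ℚ ↥(fixSp σ ⊓ W) =
      Module.finrank ℚ W := by
  have h := LinearMap.finrank_range_add_finrank_ker ((movOp σ).domRestrict W)
  rw [LinearMap.range_domRestrict, LinearMap.ker_domRestrict, ker_movOp] at h
  rw [← h]
  congr 1
  rw [← Submodule.finrank_map_subtype_eq W]
  rw [Submodule.map_comap_subtype, inf_comm]

/-- If `σ ≤ γ` then the range of `movOp σ` is already attained on `fixSp (σ⁻¹ γ)`. -/
lemma AbsLe.exists_preimage {σ γ : Equiv.Perm (Fin n)} (h : AbsLe σ γ) {x : Fin n → ℚ}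
    (hx : x ∈ LinearMap.range (movOp σ)) : ∃ y, movOp σ y = x ∧ movOp γ y = x := by
  have h1 : (fixSp (σ⁻¹ * γ)).map (movOp σ) = LinearMap.range (movOp σ) := by
    refine Submodule.eq_of_le_of_finrank_le ?_ ?_
    · rintro _ ⟨y, -, rfl⟩
      exact LinearMap.mem_range_self _ _
    · have h2 := finrank_fixSp_inf σ (fixSp (σ⁻¹ * γ))
      rw [h.fixSp_eq, finrank_fixSp, finrank_fixSp] at h2
      rw [finrank_range_movOp]
      rw [absLe_iff] at h
      have := cayleyLength_add_cycleCount σ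
      omega
  rw [← h1] at hx
  obtain ⟨y, hy, rfl⟩ := hx
  exact ⟨y, rfl, ((movOp_eq_iff σ γ y).2 hy).symm⟩

/-- Below a common upper bound, the absolute order is refinement of cycle partitions. Each
vector `x` of `range (movOp σ) ≤ range (movOp τ)` has preimages `y`, `y'` common to `σ, γ` and
to `τ, γ`; they differ by an element of `fixSp γ ≤ fixSp τ`, so `y` is common to `σ, τ`. -/
lemma absLe_of_fixSp_le {σ τ γ : Equiv.Perm (Fin n)} (hσ : AbsLe σ γ) (hτ : AbsLe τ γ)
    (h : fixSp τ ≤ fixSp σ) : AbsLe σ τ := by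
  have h1 : LinearMap.range (movOp σ) ≤ (fixSp (σ⁻¹ * τ)).map (movOp σ) := by
    intro x hx
    obtain ⟨y, hy, hyγ⟩ := hσ.exists_preimage hx
    obtain ⟨y', hy', hyγ'⟩ := hτ.exists_preimage (range_movOp_le h hx)
    refine ⟨y, (movOp_eq_iff σ τ y).1 ?_, hy⟩
    have h2 : y - y' ∈ fixSp τ := by
      apply hτ.fixSp_le
      rw [← ker_movOp, LinearMap.mem_ker, map_sub, hyγ, hyγ', sub_self]
    rw [← ker_movOp, LinearMap.mem_ker, map_sub, hy', sub_eq_zero] at h2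
    rw [hy, h2]
  have h2 : fixSp τ ≤ fixSp σ ⊓ fixSp (σ⁻¹ * τ) := by
    refine le_inf h fun v hv => (movOp_eq_iff σ τ v).1 ?_
    have h3 := h hv
    rw [← ker_movOp, LinearMap.mem_ker] at hv h3
    rw [hv, h3]
  have h3 := Submodule.finrank_mono h1
  have h4 := Submodule.finrank_mono h2
  have h5 := finrank_fixSp_inf σ (fixSp (σ⁻¹ * τ))
  have h6 := cycleCount_mul σ (σ⁻¹ * τ)
  rw [mul_inv_cancel_left] at h6
  have := cayleyLength_add_cycleCount σ
  rw [finrank_range_movOp] at h3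
  rw [finrank_fixSp] at h4 h5
  rw [absLe_iff]
  omega

lemma absLe_iff_sameCycle {σ τ γ : Equiv.Perm (Fin n)} (hσ : AbsLe σ γ) (hτ : AbsLe τ γ) :
    AbsLe σ τ ↔ ∀ i j, σ.SameCycle i j → τ.SameCycle i j := by
  rw [← fixSp_le_iff']
  exact ⟨fun h => h.fixSp_le, absLe_of_fixSp_le hσ hτ⟩

lemma cycleCount_one : cycleCount (1 : Equiv.Perm (Fin n)) = n := by
  simp [cycleCount]

lemma cayleyLength_one : cayleyLength (1 : Equiv.Perm (Fin n)) = 0 := by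
  simp [cayleyLength, cycleCount_one]

lemma eq_one_of_cayleyLength {σ : Equiv.Perm (Fin n)} (h : cayleyLength σ = 0) : σ = 1 := by
  have h1 := cayleyLength_add_cycleCount σ
  have h2 : fixSp σ = ⊤ := by
    apply Submodule.eq_top_of_finrank_eq
    rw [finrank_fixSp]
    simp
    omega
  have h3 : fixSp (1 : Equiv.Perm (Fin n)) ≤ fixSp σ := h2 ▸ le_top
  rw [fixSp_le_iff] at h3
  ext i
  have := h3 i
  rw [Equiv.Perm.sameCycle_one] at this
  rw [← this]
  rfl

lemma one_le_cycleCount (hn : 1 ≤ n) (σ : Equiv.Perm (Fin n)) : 1 ≤ cycleCount σ := by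
  have : Nonempty (Quotient (Equiv.Perm.SameCycle.setoid σ)) := ⟨Quotient.mk _ ⟨0, hn⟩⟩
  rw [cycleCount_eq_card_quotient]
  exact Nat.card_pos

lemma cayleyLength_inv (σ : Equiv.Perm (Fin n)) : cayleyLength σ⁻¹ = cayleyLength σ := by
  unfold cayleyLength cycleCount
  rw [Equiv.Perm.cycleType_inv, Equiv.Perm.support_inv]

lemma cycleCount_conj (π σ : Equiv.Perm (Fin n)) :
    cycleCount (π * σ * π⁻¹) = cycleCount σ := by
  unfold cycleCount
  rw [Equiv.Perm.cycleType_conj, Equiv.Perm.card_support_conj]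

lemma cayleyLength_le_add (σ τ : Equiv.Perm (Fin n)) :
    cayleyLength τ ≤ cayleyLength σ + cayleyLength (σ⁻¹ * τ) := by
  simpa using cayleyLength_mul_le σ (σ⁻¹ * τ)

lemma AbsLe.refl (σ : Equiv.Perm (Fin n)) : AbsLe σ σ := by
  simp [AbsLe, cayleyLength_one]

lemma AbsLe.one_left (σ : Equiv.Perm (Fin n)) : AbsLe 1 σ := by
  simp [AbsLe, cayleyLength_one]

lemma AbsLe.trans {σ τ ρ : Equiv.Perm (Fin n)} (h1 : AbsLe σ τ) (h2 : AbsLe τ ρ) :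
    AbsLe σ ρ := by
  have h3 := cayleyLength_mul_le (σ⁻¹ * τ) (τ⁻¹ * ρ)
  rw [show σ⁻¹ * τ * (τ⁻¹ * ρ) = σ⁻¹ * ρ by group] at h3
  have h4 := cayleyLength_le_add σ ρ
  unfold AbsLe at *
  omega

lemma AbsLe.length_le {σ τ : Equiv.Perm (Fin n)} (h : AbsLe σ τ) :
    cayleyLength σ ≤ cayleyLength τ := by
  unfold AbsLe at h
  omega

lemma AbsLe.eq_of_length_le {σ τ : Equiv.Perm (Fin n)} (h : AbsLe σ τ)
    (h' : cayleyLength τ ≤ cayleyLength σ) : σ = τ := by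
  unfold AbsLe at h
  have h2 := eq_one_of_cayleyLength (σ := σ⁻¹ * τ) (by omega)
  exact (inv_mul_eq_one.1 h2)

lemma AbsLe.antisymm {σ τ : Equiv.Perm (Fin n)} (h : AbsLe σ τ) (h' : AbsLe τ σ) : σ = τ :=
  h.eq_of_length_le h'.length_le

lemma AbsLe.conj {σ τ : Equiv.Perm (Fin n)} (π : Equiv.Perm (Fin n)) (h : AbsLe σ τ) :
    AbsLe (π * σ * π⁻¹) (π * τ * π⁻¹) := by
  rw [absLe_iff] at *
  rw [show (π * σ * π⁻¹)⁻¹ * (π * τ * π⁻¹) = π * (σ⁻¹ * τ) * π⁻¹ by group]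
  simpa only [cycleCount_conj] using h

/-- Full cycles are characterised by `cycleCount = 1`, up to conjugacy. -/
lemma exists_conj_finRotate {γ : Equiv.Perm (Fin n)} (hn : 1 ≤ n) (h : cycleCount γ = 1) :
    ∃ π : Equiv.Perm (Fin n), π * γ * π⁻¹ = finRotate n := by
  rcases Nat.lt_or_ge n 2 with h2 | h2
  · have : n = 1 := by omega
    subst this
    exact ⟨1, Subsingleton.elim _ _⟩
  · obtain ⟨m, rfl⟩ := Nat.exists_eq_add_of_le h2
    have hs : γ.support.card ≤ 2 + m := by simpa using Finset.card_le_univ γ.support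
    have hne : γ ≠ 1 := by
      rintro rfl
      rw [cycleCount_one] at h
      omega
    have hpos : 0 < γ.cycleType.card := by
      rw [Multiset.card_pos]
      simpa using hne
    unfold cycleCount at h
    have hc1 : γ.cycleType.card = 1 := by omega
    obtain ⟨a, ha⟩ := Multiset.card_eq_one.1 hc1
    have hsum := Equiv.Perm.sum_cycleType γ
    rw [ha, Multiset.sum_singleton] at hsum
    have : a = 2 + m := by omega
    have hconj : IsConj γ (finRotate (2 + m)) := by
      rw [Equiv.Perm.isConj_iff_cycleType_eq, ha, this, add_comm 2 m, cycleType_finRotate]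
    obtain ⟨c, hc⟩ := isConj_iff.1 hconj
    exact ⟨c, hc⟩

end CycleCount

/-! ### Noncrossing permutations and Dyck paths -/

section Noncrossing

variable {n : ℕ}

/-- Cutting `x` out of its cycle creates a new cycle. -/
lemma cycleCount_cut (σ : Equiv.Perm (Fin n)) {x : Fin n} (hx : σ x ≠ x) :
    cycleCount σ + 1 ≤ cycleCount (Equiv.swap x (σ x) * σ) := by
  classical
  have hle : fixSp σ ≤ fixSp (Equiv.swap x (σ x) * σ) := by
    intro v hv i
    have h1 := hv i
    have h2 := hv x
    rw [Equiv.Perm.mul_apply, Equiv.swap_apply_def]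
    split_ifs with h3 h4
    · rw [h3] at h1
      rw [h2, h1]
    · rw [h4] at h1
      rw [← h1, h2]
    · exact h1
  have hlt : fixSp σ < fixSp (Equiv.swap x (σ x) * σ) := by
    refine lt_of_le_of_ne hle fun heq => ?_
    have h1 : (Pi.single x 1 : Fin n → ℚ) ∈ fixSp (Equiv.swap x (σ x) * σ) := by
      intro i
      rw [Equiv.Perm.mul_apply, Equiv.swap_apply_def]
      split_ifs with h3 h4
      · have : i ≠ x := by rintro rfl; exact hx h3
        simp [this, hx]
      · have : i = x := σ.injective h4
        simp [this]
      · have : i ≠ x := by rintro rfl; exact h4 rfl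
        simp [this, h3]
    rw [← heq] at h1
    have := h1 x
    simp [hx] at this
  have := Submodule.finrank_lt_finrank_of_lt hlt
  rw [finrank_fixSp, finrank_fixSp] at this
  omega

lemma cayleyLength_swap_le (x y : Fin n) : cayleyLength (Equiv.swap x y) ≤ 1 := by
  by_cases h : x = y
  · subst h
    rw [Equiv.swap_self]
    have := cayleyLength_one (n := n)
    rw [Equiv.Perm.one_def] at this
    omega
  · have h1 := Equiv.Perm.card_support_swap h
    have h2 : (Equiv.swap x y).support.card ≤ n := by
      simpa using Finset.card_le_univ (Equiv.swap x y).support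
    have h3 : (Equiv.swap x y).cycleType.card = 1 := by
      rw [(Equiv.Perm.swap_isSwap_iff.2 h).isCycle.cycleType]
      simp
    unfold cayleyLength cycleCount
    omega

lemma AbsLe.cut {σ γ : Equiv.Perm (Fin n)} (h : AbsLe σ γ) {x : Fin n} (hx : σ x ≠ x) :
    AbsLe (Equiv.swap x (σ x) * σ) (Equiv.swap x (σ x) * γ) := by
  have h1 := cycleCount_cut σ hx
  have h2 := cayleyLength_add_cycleCount σ
  have h3 := cayleyLength_add_cycleCount (Equiv.swap x (σ x) * σ)
  have h4 := cayleyLength_swap_le x (σ x)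
  have h5 := cayleyLength_mul_le (Equiv.swap x (σ x)) (Equiv.swap x (σ x) * γ)
  rw [← mul_assoc, Equiv.swap_mul_self, one_mul] at h5
  have h6 := cayleyLength_le_add (Equiv.swap x (σ x) * σ) (Equiv.swap x (σ x) * γ)
  have h7 : (Equiv.swap x (σ x) * σ)⁻¹ * (Equiv.swap x (σ x) * γ) = σ⁻¹ * γ := by
    group
  rw [h7] at h6
  unfold AbsLe at *
  rw [h7]
  omega

lemma finRotate_val (i : Fin n) :
    ((finRotate n i : Fin n) : ℕ) = if (i : ℕ) + 1 = n then 0 else (i : ℕ) + 1 := by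
  rcases n with _ | n
  · exact i.elim0
  · split_ifs with h
    · have : i = Fin.last n := Fin.ext (by simp; omega)
      rw [this, finRotate_last]
      rfl
    · refine coe_finRotate_of_ne_last fun h' => h ?_
      rw [h']
      simp

/-- The noncrossing property: cutting the arc between `p < q` leaves a permutation below
`swap p q * finRotate n`, one of whose cycles is the interval `[p, q)`. -/
lemma AbsLe.arc {σ : Equiv.Perm (Fin n)} (h : AbsLe σ (finRotate n)) {p q : Fin n}
    (hpq : p < q) (hσ : σ p = q ∨ σ q = p) (i : Fin n) :
    p ≤ i ∧ i < q ↔ p < σ i ∧ σ i ≤ q := by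
  classical
  have h1 : fixSp (Equiv.swap p q * finRotate n) ≤ fixSp (Equiv.swap p q * σ) := by
    rcases hσ with hσ | hσ
    · have := (h.cut (x := p) (by rw [hσ]; exact hpq.ne')).fixSp_le
      rwa [hσ] at this
    · have := (h.cut (x := q) (by rw [hσ]; exact hpq.ne)).fixSp_le
      rwa [hσ, Equiv.swap_comm] at this
  have h2 : (fun i : Fin n => if p ≤ i ∧ i < q then (1 : ℚ) else 0) ∈
      fixSp (Equiv.swap p q * finRotate n) := by
    intro i
    have hi := finRotate_val i
    refine if_congr ?_ rfl rfl
    rw [Equiv.Perm.mul_apply, Equiv.swap_apply_def]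
    have := i.2
    have := q.2
    simp only [Fin.le_def, Fin.lt_def, Fin.ext_iff] at *
    split_ifs at * <;> omega
  have h3 := h1 h2 i
  have h4 : (p ≤ (Equiv.swap p q * σ) i ∧ (Equiv.swap p q * σ) i < q) ↔ p ≤ i ∧ i < q := by
    by_contra h4
    by_cases h5 : p ≤ i ∧ i < q <;>
      by_cases h6 : p ≤ (Equiv.swap p q * σ) i ∧ (Equiv.swap p q * σ) i < q <;>
      simp only [h5, h6] at h3 h4 <;> simp at h3 h4
  rw [← h4, Equiv.Perm.mul_apply, Equiv.swap_apply_def]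
  simp only [Fin.le_def, Fin.lt_def, Fin.ext_iff] at *
  split_ifs <;> omega

/-- The Dyck path of a permutation `σ` of `Fin n`: with steps numbered from `0`, the steps
`2 x + 1` and `2 σ(x)` are the two ends of the arc `x`, and the height at time `j` counts the
arcs with exactly one end before `j`. -/
def arcPath (σ : Equiv.Perm (Fin n)) (j : ℕ) : ℕ :=
  (Finset.univ.filter fun x : Fin n =>
    ¬ (2 * (x : ℕ) + 2 ≤ j ↔ 2 * ((σ x : Fin n) : ℕ) + 1 ≤ j)).card

lemma arcPath_out (σ : Equiv.Perm (Fin n)) (p : Fin n) :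
    if p < σ p then arcPath σ (2 * p + 1 + 1) = arcPath σ (2 * p + 1) + 1
    else arcPath σ (2 * p + 1) = arcPath σ (2 * p + 1 + 1) + 1 := by
  split_ifs with h
  all_goals
    unfold arcPath
    rw [Fin.lt_def] at h
    rw [← Finset.card_insert_of_notMem (a := p)]
    · congr 1
      ext x
      by_cases hx : x = p
      · subst hx; simp; try omega
      · have : (x : ℕ) ≠ p := fun h => hx (Fin.ext h)
        simp [hx]
        try omega
    · simp; try omega

lemma arcPath_in (σ : Equiv.Perm (Fin n)) (p : Fin n) :
    if σ⁻¹ p < p then arcPath σ (2 * p) = arcPath σ (2 * p + 1) + 1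
    else arcPath σ (2 * p + 1) = arcPath σ (2 * p) + 1 := by
  obtain ⟨y, rfl⟩ := σ.surjective p
  have hy : σ⁻¹ (σ y) = y := by simp
  rw [hy]
  split_ifs with h
  all_goals
    unfold arcPath
    rw [Fin.lt_def] at h
    rw [← Finset.card_insert_of_notMem (a := y)]
    · congr 1
      ext x
      by_cases hx : x = y
      · subst hx; simp; try omega
      · have : ((σ x : Fin n) : ℕ) ≠ σ y := fun h => hx (σ.injective (Fin.ext h))
        simp [hx]
        try omega
    · simp; try omega

lemma arcPath_isDyck (σ : Equiv.Perm (Fin n)) : IsDyck n (arcPath σ) := by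
  refine ⟨?_, fun j hj => ?_, fun j hj => ?_⟩
  · simp [arcPath]
  · unfold arcPath
    rw [Finset.card_eq_zero, Finset.filter_eq_empty_iff]
    intro x _
    have := x.2
    have := (σ x).2
    simp only [not_not]
    omega
  · obtain ⟨p, rfl | rfl⟩ := j.even_or_odd'
    · have := arcPath_in σ ⟨p, by omega⟩
      simp only at this
      split_ifs at this <;> tauto
    · have := arcPath_out σ ⟨p, by omega⟩
      simp only at this
      split_ifs at this <;> tauto

lemma IsDyck.ext_steps {H K : ℕ → ℕ} (hH : IsDyck n H) (hK : IsDyck n K)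
    (h : ∀ j < 2 * n, (H j < H (j + 1) ↔ K j < K (j + 1))) : H = K := by
  funext j
  induction j with
  | zero => rw [hH.1, hK.1]
  | succ j ih =>
    rcases Nat.lt_or_ge j (2 * n) with hj | hj
    · have h1 := h j hj
      rcases hH.2.2 j hj with h2 | h2 <;> rcases hK.2.2 j hj with h3 | h3 <;> omega
    · rw [hH.2.1 _ (by omega), hK.2.1 _ (by omega)]

lemma arcPath_eq_of_steps {σ : Equiv.Perm (Fin n)} {H : ℕ → ℕ} (hH : IsDyck n H)
    (hin : ∀ p : Fin n, H (2 * p) < H (2 * p + 1) ↔ p ≤ σ⁻¹ p)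
    (hout : ∀ p : Fin n, H (2 * p + 1) < H (2 * p + 1 + 1) ↔ p < σ p) : arcPath σ = H := by
  refine (arcPath_isDyck σ).ext_steps hH fun j hj => ?_
  obtain ⟨p, rfl | rfl⟩ := j.even_or_odd'
  · have h1 := arcPath_in σ ⟨p, by omega⟩
    have h2 := hin ⟨p, by omega⟩
    simp only at h1 h2
    rw [h2, ← not_lt]
    split_ifs at h1 with h3
    · exact iff_of_false (by omega) (by simpa using h3)
    · exact iff_of_true (by omega) h3
  · have h1 := arcPath_out σ ⟨p, by omega⟩
    have h2 := hout ⟨p, by omega⟩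
    simp only at h1 h2
    rw [h2]
    split_ifs at h1 with h3
    · exact iff_of_true (by omega) h3
    · exact iff_of_false (by omega) h3

/-- An arc between `p` and `q` joins two visits of the path to the same height. -/
lemma AbsLe.arcPath_arc {σ : Equiv.Perm (Fin n)} (h : AbsLe σ (finRotate n)) {p q : Fin n}
    (hpq : p < q) (hσ : σ p = q ∨ σ q = p) :
    arcPath σ (2 * p + 1) = arcPath σ (2 * q + 1) ∧
      ∀ j, 2 * (p : ℕ) + 1 ≤ j → j ≤ 2 * (q : ℕ) + 1 →
        arcPath σ (2 * p + 1) ≤ arcPath σ j := by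
  have key := h.arc hpq hσ
  simp only [Fin.le_def, Fin.lt_def] at key hpq
  constructor
  · unfold arcPath
    congr 1
    ext x
    have := key x
    simp only [Finset.mem_filter, Finset.mem_univ, true_and]
    omega
  · intro j h1 h2
    refine Finset.card_le_card fun x hx => ?_
    have := key x
    simp only [Finset.mem_filter, Finset.mem_univ, true_and] at *
    omega

/-- Strictly between the two ends of an ascending arc the path stays above the height of the
arc. -/
lemma AbsLe.arcPath_lt {σ : Equiv.Perm (Fin n)} (h : AbsLe σ (finRotate n)) {p : Fin n}
    (hp : p < σ p) {j : ℕ} (h1 : 2 * (p : ℕ) + 2 ≤ j) (h2 : j ≤ 2 * ((σ p : Fin n) : ℕ)) :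
    arcPath σ (2 * p + 1) < arcPath σ j := by
  have key := h.arc hp (Or.inl rfl)
  simp only [Fin.le_def, Fin.lt_def] at key hp
  refine Finset.card_lt_card (Finset.ssubset_iff_of_subset (fun x hx => ?_) |>.2 ⟨p, ?_, ?_⟩)
  · have := key x
    simp only [Finset.mem_filter, Finset.mem_univ, true_and] at *
    omega
  · simp only [Finset.mem_filter, Finset.mem_univ, true_and]
    omega
  · simp only [Finset.mem_filter, Finset.mem_univ, true_and]
    omega

/-- Linked points are joined by following arcs to the right, by induction on their distance. -/
lemma AbsLe.sameCycle_of_linked {σ : Equiv.Perm (Fin n)} (h : AbsLe σ (finRotate n)) (m : ℕ) :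
    ∀ p q : Fin n, (q : ℕ) - p < m → Linked (arcPath σ) p q → σ.SameCycle p q := by
  induction m with
  | zero => intro p q h; omega
  | succ m ih =>
    rintro p q hm ⟨h1, h2, h3⟩
    by_cases hpq : p = q
    · rw [hpq]
    have hlt : (p : ℕ) < q := lt_of_le_of_ne h1 fun h => hpq (Fin.ext h)
    have hout := arcPath_out σ p
    have hup := h3 (2 * p + 1 + 1) (by omega) (by omega)
    split_ifs at hout with hp
    · have hle : ((σ p : Fin n) : ℕ) ≤ q := by
        by_contra hcon
        have := h.arcPath_lt hp (j := 2 * q + 1) (by omega) (by omega)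
        omega
      have harc := (h.arcPath_arc hp (Or.inl rfl)).1
      have hp' : (p : ℕ) < σ p := hp
      refine (Equiv.Perm.sameCycle_apply_left).1 (ih (σ p) q (by omega) ⟨hle, by omega, ?_⟩)
      intro j hj1 hj2
      rw [← harc]
      exact h3 j (by omega) hj2
    · omega

lemma AbsLe.linked_of_sameCycle {σ : Equiv.Perm (Fin n)} (h : AbsLe σ (finRotate n))
    {p q : Fin n} (hpq : σ.SameCycle p q) :
    arcPath σ (2 * p + 1) = arcPath σ (2 * q + 1) ∧
      ∀ j, (2 * (p : ℕ) + 1 ≤ j ∧ j ≤ 2 * (q : ℕ) + 1 ∨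
        2 * (q : ℕ) + 1 ≤ j ∧ j ≤ 2 * (p : ℕ) + 1) → arcPath σ (2 * p + 1) ≤ arcPath σ j := by
  obtain ⟨k, rfl⟩ := hpq.exists_nat_pow_eq
  clear hpq
  induction k with
  | zero =>
    refine ⟨rfl, fun j hj => ?_⟩
    simp only [pow_zero, Equiv.Perm.one_apply] at hj
    have : j = 2 * p + 1 := by omega
    rw [this]
  | succ k ih =>
    rw [pow_succ', Equiv.Perm.mul_apply]
    generalize (σ ^ k) p = x at ih
    obtain ⟨ih1, ih2⟩ := ih
    rcases lt_trichotomy x (σ x) with hx | hx | hx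
    · obtain ⟨h1, h2⟩ := h.arcPath_arc hx (Or.inl rfl)
      refine ⟨by omega, fun j hj => ?_⟩
      by_cases hj' : 2 * (x : ℕ) + 1 ≤ j ∧ j ≤ 2 * ((σ x : Fin n) : ℕ) + 1
      · have := h2 j hj'.1 hj'.2
        omega
      · exact ih2 j (by rw [Fin.lt_def] at hx; omega)
    · rw [← hx]
      exact ⟨ih1, ih2⟩
    · obtain ⟨h1, h2⟩ := h.arcPath_arc hx (Or.inr rfl)
      refine ⟨by omega, fun j hj => ?_⟩
      by_cases hj' : 2 * ((σ x : Fin n) : ℕ) + 1 ≤ j ∧ j ≤ 2 * (x : ℕ) + 1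
      · have := h2 j hj'.1 hj'.2
        omega
      · exact ih2 j (by rw [Fin.lt_def] at hx; omega)

lemma AbsLe.linked_iff {σ : Equiv.Perm (Fin n)} (h : AbsLe σ (finRotate n)) (p q : Fin n) :
    Linked (arcPath σ) p q ↔ p ≤ q ∧ σ.SameCycle p q := by
  constructor
  · intro hL
    exact ⟨hL.1, h.sameCycle_of_linked _ p q (Nat.lt_succ_self _) hL⟩
  · rintro ⟨h1, h2⟩
    obtain ⟨h3, h4⟩ := h.linked_of_sameCycle h2
    exact ⟨h1, h3, fun j hj1 hj2 => h4 j (Or.inl ⟨hj1, hj2⟩)⟩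

/-- The absolute order on noncrossing permutations is refinement of Dyck paths. -/
lemma refines_arcPath_iff {σ τ : Equiv.Perm (Fin n)} (hσ : AbsLe σ (finRotate n))
    (hτ : AbsLe τ (finRotate n)) : Refines n (arcPath σ) (arcPath τ) ↔ AbsLe σ τ := by
  rw [absLe_iff_sameCycle hσ hτ]
  constructor
  · intro h i j hij
    rcases le_total i j with hle | hle
    · exact ((hτ.linked_iff i j).1 (h i j j.2 ((hσ.linked_iff i j).2 ⟨hle, hij⟩))).2
    · exact ((hτ.linked_iff j i).1 (h j i i.2 ((hσ.linked_iff j i).2 ⟨hle, hij.symm⟩))).2.symm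
  · intro h p q hq hL
    have hp : p < n := lt_of_le_of_lt hL.1 hq
    have h1 := (hσ.linked_iff ⟨p, hp⟩ ⟨q, hq⟩).1 hL
    exact (hτ.linked_iff ⟨p, hp⟩ ⟨q, hq⟩).2 ⟨h1.1, h _ _ h1.2⟩

lemma arcPath_injOn {σ τ : Equiv.Perm (Fin n)} (hσ : AbsLe σ (finRotate n))
    (hτ : AbsLe τ (finRotate n)) (h : arcPath σ = arcPath τ) : σ = τ := by
  refine AbsLe.antisymm ((refines_arcPath_iff hσ hτ).1 ?_) ((refines_arcPath_iff hτ hσ).1 ?_)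
  · rw [h]; exact fun _ _ _ h => h
  · rw [h]; exact fun _ _ _ h => h

end Noncrossing

section Surj

variable {n : ℕ}

lemma arcPath_in_iff (σ : Equiv.Perm (Fin n)) (p : Fin n) :
    arcPath σ (2 * p) < arcPath σ (2 * p + 1) ↔ p ≤ σ⁻¹ p := by
  have h := arcPath_in σ p
  rw [← not_lt (a := σ⁻¹ p)]
  split_ifs at h with h1
  · exact iff_of_false (by omega) (not_not.2 h1)
  · exact iff_of_true (by omega) h1

lemma arcPath_out_iff (σ : Equiv.Perm (Fin n)) (p : Fin n) :
    arcPath σ (2 * p + 1) < arcPath σ (2 * p + 1 + 1) ↔ p < σ p := by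
  have h := arcPath_out σ p
  split_ifs at h with h1
  · exact iff_of_true (by omega) h1
  · exact iff_of_false (by omega) h1

lemma absLe_cut (σ : Equiv.Perm (Fin n)) {x : Fin n} (hx : σ x ≠ x) :
    AbsLe (Equiv.swap x (σ x) * σ) σ := by
  have h1 := cycleCount_cut σ hx
  have h2 := cayleyLength_add_cycleCount σ
  have h3 := cayleyLength_add_cycleCount (Equiv.swap x (σ x) * σ)
  have h4 := cayleyLength_le_add (Equiv.swap x (σ x) * σ) σ
  have h5 : cayleyLength ((Equiv.swap x (σ x) * σ)⁻¹ * σ) ≤ 1 := by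
    rw [show (Equiv.swap x (σ x) * σ)⁻¹ * σ = σ⁻¹ * Equiv.swap x (σ x) * σ⁻¹⁻¹ by
      rw [mul_inv_rev, Equiv.swap_inv, inv_inv]]
    unfold cayleyLength
    rw [cycleCount_conj]
    exact cayleyLength_swap_le _ _
  unfold AbsLe
  omega

/-- Redirecting `p` to its successor keeps a permutation below `γ`: it cuts `p` out of its
cycle in the complement `γ⁻¹ σ`. -/
lemma AbsLe.paste {σ γ : Equiv.Perm (Fin n)} (h : AbsLe σ γ) {p : Fin n} (hp : σ p ≠ γ p) :
    AbsLe (Equiv.swap (γ p) (σ p) * σ) γ := by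
  have h0 : (γ⁻¹ * σ) p ≠ p := by
    rw [Equiv.Perm.mul_apply, Ne, Equiv.Perm.inv_eq_iff_eq]
    exact hp
  have h1 := cycleCount_cut (γ⁻¹ * σ) h0
  have h1' : Equiv.swap p ((γ⁻¹ * σ) p) * (γ⁻¹ * σ) =
      γ⁻¹ * (Equiv.swap (γ p) (σ p) * σ) := by
    rw [← mul_assoc γ⁻¹, Equiv.mul_swap_eq_swap_mul, mul_assoc]
    congr 2
    simp
  rw [h1'] at h1
  have h2 := cayleyLength_add_cycleCount (γ⁻¹ * σ)
  have h3 := cayleyLength_add_cycleCount (γ⁻¹ * (Equiv.swap (γ p) (σ p) * σ))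
  have h4 := cayleyLength_inv (γ⁻¹ * σ)
  have h5 := cayleyLength_inv (γ⁻¹ * (Equiv.swap (γ p) (σ p) * σ))
  rw [mul_inv_rev, inv_inv] at h4 h5
  have h6 := cayleyLength_mul_le (Equiv.swap (γ p) (σ p)) σ
  have h7 := cayleyLength_swap_le (γ p) (σ p)
  have h8 := cayleyLength_le_add (Equiv.swap (γ p) (σ p) * σ) γ
  unfold AbsLe at *
  omega

/-- A highest peak of height at least `2` can be flipped down. -/
lemma IsDyck.flip {H : ℕ → ℕ} (hH : IsDyck n H) {j : ℕ} (hj : 2 ≤ H j)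
    (hmax : ∀ i, H i ≤ H j) : ∃ i, j = i + 1 ∧ i + 2 ≤ 2 * n ∧ H j = H i + 1 ∧
      H j = H (i + 2) + 1 ∧ IsDyck n (Function.update H j (H j - 2)) := by
  rcases j with _ | i
  · have := hH.1; omega
  have hi : i + 2 ≤ 2 * n := by
    by_contra hcon
    have := hH.2.1 (i + 1) (by omega)
    omega
  have h1 := hH.2.2 i (by omega)
  have h2 := hH.2.2 (i + 1) (by omega)
  have h3 := hmax i
  have h4 := hmax (i + 2)
  have e1 : H (i + 1) = H i + 1 := by omega
  have e2 : H (i + 1) = H (i + 2) + 1 := by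
    rw [show i + 1 + 1 = i + 2 by ring] at h2
    omega
  refine ⟨i, rfl, hi, e1, e2, ?_, fun k hk => ?_, fun k hk => ?_⟩
  · rw [Function.update_of_ne (by omega)]
    exact hH.1
  · rcases eq_or_ne k (i + 1) with rfl | hne
    · omega
    · rw [Function.update_of_ne hne]
      exact hH.2.1 k hk
  · rcases eq_or_ne k (i + 1) with rfl | hne
    · rw [Function.update_self, Function.update_of_ne (by omega)]
      rw [show i + 1 + 1 = i + 2 by ring]
      omega
    · rw [Function.update_of_ne hne]
      rcases eq_or_ne k i with rfl | hne'
      · rw [Function.update_self]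
        omega
      · rw [Function.update_of_ne (by omega)]
        exact hH.2.2 k hk

/-- Making `p` a fixed point changes, among the steps of the path, only the two at `p`. -/
lemma cut_steps {σ : Equiv.Perm (Fin n)} {p : Fin n} (h1 : σ⁻¹ p < p) (h2 : p < σ p) :
    (∀ x, x ≠ p → (x ≤ (Equiv.swap p (σ p) * σ)⁻¹ x ↔ x ≤ σ⁻¹ x)) ∧
    (∀ x, x ≠ p → (x < (Equiv.swap p (σ p) * σ) x ↔ x < σ x)) ∧
    (Equiv.swap p (σ p) * σ)⁻¹ p = p ∧ (Equiv.swap p (σ p) * σ) p = p := by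
  rw [mul_inv_rev, Equiv.swap_inv]
  have e1 : σ⁻¹ (σ p) = p := by simp
  have e2 : σ (σ⁻¹ p) = p := by simp
  refine ⟨fun x hx => ?_, fun x hx => ?_, ?_, ?_⟩
  · rw [Equiv.Perm.mul_apply, Equiv.swap_apply_def, if_neg hx]
    split_ifs with h3
    · rw [h3, e1]
      exact iff_of_false (not_le.2 (h1.trans h2)) (not_le.2 h2)
    · rfl
  · rw [Equiv.Perm.mul_apply, Equiv.swap_apply_def]
    split_ifs with h3 h4
    · rw [h3]
      have : x = σ⁻¹ p := by rw [Equiv.Perm.eq_inv_iff_eq]; exact h3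
      rw [this]
      exact iff_of_true (h1.trans h2) h1
    · exact absurd (σ.injective h4) hx
    · rfl
  · rw [Equiv.Perm.mul_apply, Equiv.swap_apply_left, e1]
  · rw [Equiv.Perm.mul_apply, Equiv.swap_apply_right]

/-- Redirecting `p` to `q` changes, among the steps of the path, only the one leaving `p` and the
one entering `q`. -/
lemma paste_steps {σ : Equiv.Perm (Fin n)} {p q : Fin n} (hpq : p < q) (h1 : σ p ≤ p)
    (h2 : q ≤ σ⁻¹ q) :
    (∀ x, x ≠ q → (x ≤ (Equiv.swap q (σ p) * σ)⁻¹ x ↔ x ≤ σ⁻¹ x)) ∧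
    (∀ x, x ≠ p → (x < (Equiv.swap q (σ p) * σ) x ↔ x < σ x)) ∧
    (Equiv.swap q (σ p) * σ)⁻¹ q = p ∧ (Equiv.swap q (σ p) * σ) p = q := by
  rw [mul_inv_rev, Equiv.swap_inv]
  have e1 : σ⁻¹ (σ p) = p := by simp
  refine ⟨fun x hx => ?_, fun x hx => ?_, ?_, ?_⟩
  · rw [Equiv.Perm.mul_apply, Equiv.swap_apply_def, if_neg hx]
    split_ifs with h3
    · rw [h3, e1]
      exact iff_of_true (h1.trans (hpq.le.trans h2)) h1
    · rfl
  · rw [Equiv.Perm.mul_apply, Equiv.swap_apply_def]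
    split_ifs with h3 h4
    · rw [h3]
      have : x = σ⁻¹ q := by rw [Equiv.Perm.eq_inv_iff_eq]; exact h3
      rw [this]
      exact iff_of_false (not_lt.2 (h1.trans (hpq.le.trans h2))) (not_lt.2 h2)
    · exact absurd (σ.injective h4) hx
    · rfl
  · rw [Equiv.Perm.mul_apply, Equiv.swap_apply_left, e1]
  · rw [Equiv.Perm.mul_apply, Equiv.swap_apply_right]

/-- Every Dyck path comes from a noncrossing permutation. By induction on its area (bounded by
`m`): flip a highest peak down, take a permutation for the smaller path, and change it by one
transposition to restore the peak. -/
lemma exists_arcPath (m : ℕ) : ∀ H : ℕ → ℕ, IsDyck n H →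
    ∑ j ∈ Finset.range (2 * n), H j < m →
    ∃ σ : Equiv.Perm (Fin n), AbsLe σ (finRotate n) ∧ arcPath σ = H := by
  induction m with
  | zero => intro H _ h; omega
  | succ m ih =>
    intro H hH hm
    by_cases hbig : ∃ j, 2 ≤ H j
    · have hex : ∃ j, 2 ≤ H j ∧ ∀ i, H i ≤ H j := by
        obtain ⟨j0, hj0⟩ := hbig
        obtain ⟨j, -, hj⟩ := Finset.exists_max_image (Finset.range (2 * n + 1)) H ⟨0, by simp⟩
        have hall : ∀ i, H i ≤ H j := by
          intro i
          rcases Nat.lt_or_ge i (2 * n + 1) with h | h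
          · exact hj i (by simpa using h)
          · rw [hH.2.1 i (by omega)]
            exact Nat.zero_le _
        exact ⟨j, hj0.trans (hall j0), hall⟩
      obtain ⟨j, hj2, hmax⟩ := hex
      obtain ⟨i, rfl, hi, e1, e2, hD⟩ := hH.flip hj2 hmax
      obtain ⟨σ, hσ, hpath⟩ := ih _ hD (by
        have hlt : ∑ k ∈ Finset.range (2 * n), Function.update H (i + 1) (H (i + 1) - 2) k <
            ∑ k ∈ Finset.range (2 * n), H k := by
          refine Finset.sum_lt_sum (fun k _ => ?_) ⟨i + 1, by simp; omega, ?_⟩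
          · rcases eq_or_ne k (i + 1) with rfl | hne
            · rw [Function.update_self]; omega
            · rw [Function.update_of_ne hne]
          · rw [Function.update_self]; omega
        omega)
      have hin := arcPath_in_iff σ
      have hout := arcPath_out_iff σ
      rw [hpath] at hin hout
      have hself : Function.update H (i + 1) (H (i + 1) - 2) (i + 1) = H (i + 1) - 2 :=
        Function.update_self _ _ _
      have hne : ∀ k, k ≠ i + 1 → Function.update H (i + 1) (H (i + 1) - 2) k = H k :=
        fun k hk => Function.update_of_ne hk _ _
      obtain ⟨p, rfl | rfl⟩ := i.even_or_odd'
      · -- a peak at time `2 p + 1`: `p` becomes a fixed point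
        have hp : p < n := by omega
        rw [show 2 * p + 2 = 2 * p + 1 + 1 by ring] at e2
        have hlow : σ⁻¹ ⟨p, hp⟩ < ⟨p, hp⟩ := by
          rw [← not_le, ← hin ⟨p, hp⟩]
          simp only
          rw [hself, hne _ (by omega)]
          omega
        have hhigh : (⟨p, hp⟩ : Fin n) < σ ⟨p, hp⟩ := by
          rw [← hout ⟨p, hp⟩]
          simp only
          rw [hself, hne _ (by omega)]
          omega
        obtain ⟨s1, s2, s3, s4⟩ := cut_steps hlow hhigh
        refine ⟨_, (absLe_cut σ hhigh.ne').trans hσ, arcPath_eq_of_steps hH (fun x => ?_)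
          fun x => ?_⟩
        · rcases eq_or_ne x ⟨p, hp⟩ with rfl | hx
          · rw [s3]
            exact iff_of_true (by simp only; omega) le_rfl
          · have hx' : (x : ℕ) ≠ p := fun h => hx (Fin.ext h)
            rw [s1 x hx, ← hin x, hne _ (by omega), hne _ (by omega)]
        · rcases eq_or_ne x ⟨p, hp⟩ with rfl | hx
          · rw [s4]
            exact iff_of_false (by simp only; omega) (lt_irrefl _)
          · have hx' : (x : ℕ) ≠ p := fun h => hx (Fin.ext h)
            rw [s2 x hx, ← hout x, hne _ (by omega), hne _ (by omega)]
      · -- a peak at time `2 p + 2`: `p` is sent to `p + 1`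
        have hp : p < n := by omega
        have hq : p + 1 < n := by omega
        have hpq : (⟨p, hp⟩ : Fin n) < ⟨p + 1, hq⟩ := by
          rw [Fin.lt_def]
          simp
        have hγ : finRotate n ⟨p, hp⟩ = ⟨p + 1, hq⟩ := by
          refine Fin.ext ?_
          rw [finRotate_val, if_neg (by simp only; omega)]
        have hlow : σ ⟨p, hp⟩ ≤ ⟨p, hp⟩ := by
          rw [← not_lt, ← hout ⟨p, hp⟩]
          simp only
          rw [hself, hne _ (by omega)]
          omega
        have hhigh : (⟨p + 1, hq⟩ : Fin n) ≤ σ⁻¹ ⟨p + 1, hq⟩ := by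
          rw [← hin ⟨p + 1, hq⟩]
          simp only [show 2 * (p + 1) = 2 * p + 1 + 1 by ring]
          rw [hself, hne _ (by omega)]
          rw [show 2 * p + 1 + 2 = 2 * p + 1 + 1 + 1 by ring] at e2
          omega
        obtain ⟨s1, s2, s3, s4⟩ := paste_steps hpq hlow hhigh
        have hle := hσ.paste (p := ⟨p, hp⟩) (by rw [hγ]; exact (hlow.trans_lt hpq).ne)
        rw [hγ] at hle
        refine ⟨_, hle, arcPath_eq_of_steps hH (fun x => ?_) fun x => ?_⟩
        · rcases eq_or_ne x ⟨p + 1, hq⟩ with rfl | hx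
          · rw [s3]
            refine iff_of_false ?_ (not_le.2 hpq)
            simp only [show 2 * (p + 1) = 2 * p + 1 + 1 by ring]
            rw [show 2 * p + 1 + 2 = 2 * p + 1 + 1 + 1 by ring] at e2
            omega
          · have hx' : (x : ℕ) ≠ p + 1 := fun h => hx (Fin.ext h)
            rw [s1 x hx, ← hin x, hne _ (by omega), hne _ (by omega)]
        · rcases eq_or_ne x ⟨p, hp⟩ with rfl | hx
          · rw [s4]
            exact iff_of_true (by simp only; omega) hpq
          · have hx' : (x : ℕ) ≠ p := fun h => hx (Fin.ext h)
            rw [s2 x hx, ← hout x, hne _ (by omega), hne _ (by omega)]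
    · push Not at hbig
      -- the only path of height at most `1` is that of the identity
      refine ⟨1, AbsLe.one_left _, arcPath_eq_of_steps hH (fun p => ?_) fun p => ?_⟩
      · have h1 := hbig (2 * p)
        have h2 := hH.2.2 (2 * p) (by omega)
        have h3 := hH.parity (2 * p) (by omega)
        simp
        omega
      · have h1 := hbig (2 * p + 1 + 1)
        have h2 := hH.2.2 (2 * p + 1) (by omega)
        have h3 := hH.parity (2 * p + 1) (by omega)
        simp only [Equiv.Perm.one_apply, lt_irrefl, iff_false]
        omega

end Surj

section Count

variable {n : ℕ} {U : Type*} [Fintype U]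

lemma ncard_absLe_finRotate (R : U → U → Prop) (n : ℕ) :
    {a : U → Equiv.Perm (Fin n) | (∀ x, AbsLe (a x) (finRotate n)) ∧
      ∀ x y, R x y → AbsLe (a x) (a y)}.ncard =
    walkNum (PState.nb R) (fun _ => 0, fun _ _ _ => 0) (2 * n)
      (fun _ => 0, fun _ _ _ => 0) := by
  rw [← ncard_dyck_families n]
  refine Set.ncard_congr (fun a _ x => arcPath (a x)) ?_ ?_ ?_
  · rintro a ⟨h1, h2⟩
    exact ⟨fun x => arcPath_isDyck _, fun x y h =>
      (refines_arcPath_iff (h1 x) (h1 y)).2 (h2 x y h)⟩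
  · rintro a b ⟨ha, -⟩ ⟨hb, -⟩ h
    funext x
    exact arcPath_injOn (ha x) (hb x) (congrFun h x)
  · rintro H ⟨h1, h2⟩
    choose a ha hpath using fun x => exists_arcPath _ (H x) (h1 x) (Nat.lt_succ_self _)
    refine ⟨a, ⟨ha, fun x y h => ?_⟩, funext hpath⟩
    rw [← refines_arcPath_iff (ha x) (ha y), hpath, hpath]
    exact h2 x y h

/-- Labelings by permutations below a full cycle that are monotone along `R` are counted by
closed walks. -/
lemma ncard_absLe (R : U → U → Prop) {n : ℕ} (hn : 1 ≤ n) {γ : Equiv.Perm (Fin n)}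
    (hγ : cycleCount γ = 1) :
    {a : U → Equiv.Perm (Fin n) | (∀ x, AbsLe (a x) γ) ∧
      ∀ x y, R x y → AbsLe (a x) (a y)}.ncard =
    walkNum (PState.nb R) (fun _ => 0, fun _ _ _ => 0) (2 * n)
      (fun _ => 0, fun _ _ _ => 0) := by
  obtain ⟨π, hπ⟩ := exists_conj_finRotate hn hγ
  have hπ' : π⁻¹ * finRotate n * π⁻¹⁻¹ = γ := by rw [← hπ]; group
  rw [← ncard_absLe_finRotate]
  refine Set.ncard_congr (fun a _ x => π * a x * π⁻¹) ?_ ?_ ?_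
  · rintro a ⟨h1, h2⟩
    refine ⟨fun x => ?_, fun x y h => (h2 x y h).conj π⟩
    have := (h1 x).conj π
    rwa [hπ] at this
  · rintro a b - - h
    funext x
    have := congrFun h x
    simpa using this
  · rintro a ⟨h1, h2⟩
    refine ⟨fun x => π⁻¹ * a x * π⁻¹⁻¹, ⟨fun x => ?_, fun x y h => (h2 x y h).conj π⁻¹⟩, ?_⟩
    · have := (h1 x).conj π⁻¹
      rwa [hπ'] at this
    · funext x
      group

end Count

/-! ### Optimal potentials and the minimizers of the Hamiltonian -/

section Network

variable {V : Type*} [Fintype V] (G : SimpleGraph V)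

open Classical in
/-- The total variation of an integer potential over the oriented edges of `G`; every edge
counts twice. -/
noncomputable def gradCost (f : V → ℤ) : ℤ := ∑ d : G.Dart, ((f d.snd - f d.fst).natAbs : ℤ)

open Classical in
lemma two_mul_hamiltonian {n : ℕ} (α : V → Equiv.Perm (Fin n)) :
    2 * hamiltonian G α = ∑ d : G.Dart, cayleyDist (α d.fst) (α d.snd) := by
  have h1 : hamiltonian G α = ∑ e ∈ G.edgeFinset, edgeTerm α e := by
    unfold hamiltonian
    rw [← SimpleGraph.coe_edgeFinset, finsum_mem_coe_finset]
  have h2 : ∀ d : G.Dart, cayleyDist (α d.fst) (α d.snd) = edgeTerm α d.edge := fun d => rfl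
  simp_rw [h2]
  rw [← Finset.sum_fiberwise_of_maps_to (t := G.edgeFinset) (g := fun d : G.Dart => d.edge)
    (fun d _ => by rw [SimpleGraph.mem_edgeFinset]; exact d.edge_mem), h1, Finset.mul_sum]
  refine Finset.sum_congr rfl fun e he => ?_
  rw [Finset.sum_congr rfl (g := fun _ => edgeTerm α e)
    (fun d hd => by rw [(Finset.mem_filter.1 hd).2]), Finset.sum_const,
    G.dart_edge_fiber_card e (SimpleGraph.mem_edgeFinset.1 he), smul_eq_mul]

open Classical in
/-- The characteristic potential of a set of vertices. -/
noncomputable def ind (S : Set V) (x : V) : ℤ := if x ∈ S then 1 else 0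

lemma gradCost_nonneg (f : V → ℤ) : 0 ≤ gradCost G f :=
  Finset.sum_nonneg fun _ _ => Int.natCast_nonneg _

/-- `S` is a minimum cut: it contains `t` but not `s`, and its number of boundary edges, which is
half of `gradCost G (ind S)`, is least possible. -/
structure IsMinCut (s t : V) (S : Set V) : Prop where
  notMem : s ∉ S
  mem : t ∈ S
  le : ∀ S' : Set V, s ∉ S' → t ∈ S' → gradCost G (ind S) ≤ gradCost G (ind S')

lemma exists_isMinCut {s t : V} (hst : s ≠ t) : ∃ S, IsMinCut G s t S := by
  obtain ⟨S, ⟨h1, h2⟩, h3⟩ := Set.exists_min_image {S : Set V | s ∉ S ∧ t ∈ S}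
    (fun S => gradCost G (ind S)) (Set.toFinite _) ⟨{t}, hst, rfl⟩
  exact ⟨S, h1, h2, fun S' h h' => h3 S' ⟨h, h'⟩⟩

variable {G} {s t : V} {S : Set V}

/-- Coarea inequality, by peeling off one level set at a time; `m` is the induction variable. -/
lemma IsMinCut.coarea (hS : IsMinCut G s t S) (m : ℕ) : ∀ f : V → ℤ, f t - f s ≤ m →
    gradCost G (ind S) * (f t - f s) ≤ gradCost G f := by
  induction m with
  | zero =>
    intro f hf
    have h1 := gradCost_nonneg G f
    have h2 := gradCost_nonneg G (ind S)
    have : gradCost G (ind S) * (f t - f s) ≤ 0 :=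
      mul_nonpos_of_nonneg_of_nonpos h2 (by simpa using hf)
    omega
  | succ m ih =>
    intro f hf
    by_cases hpos : f t - f s ≤ 0
    · have h1 := gradCost_nonneg G f
      have : gradCost G (ind S) * (f t - f s) ≤ 0 :=
        mul_nonpos_of_nonneg_of_nonpos (gradCost_nonneg G (ind S)) hpos
      omega
    · have ht : t ∈ {x | f s < f x} := by simp only [Set.mem_ofPred_eq]; omega
      have hs : s ∉ {x | f s < f x} := by simp
      have hsum : gradCost G f = gradCost G (fun x => f x - ind {x | f s < f x} x) +
          gradCost G (ind {x | f s < f x}) := by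
        unfold gradCost
        rw [← Finset.sum_add_distrib]
        refine Finset.sum_congr rfl fun d _ => ?_
        simp only [ind, Set.mem_ofPred_eq]
        split_ifs <;> omega
      have h1 := ih (fun x => f x - ind {x | f s < f x} x) (by
        simp only [ind, if_pos ht, if_neg hs]
        push_cast at hf
        omega)
      simp only [ind, if_pos ht, if_neg hs] at h1
      have h2 := hS.le _ hs ht
      rw [hsum]
      simp only [ind] at *
      linarith

/-- A potential is optimal if it attains equality in the coarea inequality; the other inequality
always holds. -/
def IsOptimal (G : SimpleGraph V) (s t : V) (S : Set V) (f : V → ℤ) : Prop :=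
  gradCost G f ≤ gradCost G (ind S) * (f t - f s)

lemma IsMinCut.le_gradCost (hS : IsMinCut G s t S) (f : V → ℤ) :
    gradCost G (ind S) * (f t - f s) ≤ gradCost G f :=
  hS.coarea (f t - f s).toNat f (Int.self_le_toNat _)

/-- Optimal potentials are closed under sums, and the gradients of two of them never point in
opposite directions. -/
lemma IsMinCut.isOptimal_add (hS : IsMinCut G s t S) {f g : V → ℤ} (hf : IsOptimal G s t S f)
    (hg : IsOptimal G s t S g) : IsOptimal G s t S (f + g) ∧
      ∀ x y, G.Adj x y → (((f + g) y - (f + g) x).natAbs : ℤ) =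
        ((f y - f x).natAbs : ℤ) + ((g y - g x).natAbs : ℤ) := by
  classical
  have hle : ∀ d ∈ (Finset.univ : Finset G.Dart), (((f + g) d.snd - (f + g) d.fst).natAbs : ℤ) ≤
      ((f d.snd - f d.fst).natAbs : ℤ) + ((g d.snd - g d.fst).natAbs : ℤ) := by
    intro d _
    simp only [Pi.add_apply]
    omega
  have hsum := Finset.sum_le_sum hle
  rw [Finset.sum_add_distrib] at hsum
  have h1 := hS.le_gradCost (f + g)
  have h2 : gradCost G (ind S) * ((f + g) t - (f + g) s) =
      gradCost G (ind S) * (f t - f s) + gradCost G (ind S) * (g t - g s) := by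
    simp only [Pi.add_apply]
    ring
  unfold IsOptimal at *
  have h3 : gradCost G (f + g) ≤ gradCost G f + gradCost G g := hsum
  refine ⟨by linarith, fun x y hxy => ?_⟩
  have heq : ∑ d : G.Dart, (((f + g) d.snd - (f + g) d.fst).natAbs : ℤ) =
      ∑ d : G.Dart, (((f d.snd - f d.fst).natAbs : ℤ) + ((g d.snd - g d.fst).natAbs : ℤ)) := by
    rw [Finset.sum_add_distrib]
    change gradCost G (f + g) = gradCost G f + gradCost G g
    linarith
  exact (Finset.sum_eq_sum_iff_of_le hle).1 heq ⟨(x, y), hxy⟩ (Finset.mem_univ _)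

/-- There is an optimal potential whose gradient dominates, in support and direction, the
gradient of every optimal potential: any one with the most edges of nonzero gradient. -/
lemma IsMinCut.exists_generic (hS : IsMinCut G s t S) : ∃ f : V → ℤ, IsOptimal G s t S f ∧
    f s < f t ∧ ∀ g : V → ℤ, IsOptimal G s t S g → g s ≤ g t →
      ∀ x y, G.Adj x y → f x ≤ f y → g x ≤ g y := by
  classical
  let D : (V → ℤ) → Finset (V × V) := fun f =>
    Finset.univ.filter fun z => G.Adj z.1 z.2 ∧ f z.1 ≠ f z.2
  obtain ⟨_, ⟨f, ⟨hf, hfst⟩, rfl⟩, hmax⟩ := Set.exists_max_image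
    (D '' {f | IsOptimal G s t S f ∧ f s < f t}) Finset.card (Set.toFinite _)
    ⟨_, ind S, ⟨by simp [IsOptimal, ind, hS.mem, hS.notMem], by
      simp [ind, hS.mem, hS.notMem]⟩, rfl⟩
  refine ⟨f, hf, hfst, fun g hg hgst x y hxy hle => ?_⟩
  obtain ⟨hopt, habs⟩ := hS.isOptimal_add hf hg
  by_contra hlt
  have hsub : D f ⊆ D (f + g) := by
    intro z hz
    simp only [D, Finset.mem_filter, Finset.mem_univ, true_and, Pi.add_apply] at hz ⊢
    have := habs z.1 z.2 hz.1
    simp only [Pi.add_apply] at this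
    exact ⟨hz.1, by omega⟩
  have hcard := hmax (D (f + g)) ⟨f + g, ⟨hopt, by simp only [Pi.add_apply]; omega⟩, rfl⟩
  have heq := Finset.eq_of_subset_of_card_le hsub hcard
  have hxy1 := habs x y hxy
  simp only [Pi.add_apply] at hxy1
  have hmem : (x, y) ∈ D (f + g) := by
    simp only [D, Finset.mem_filter, Finset.mem_univ, true_and, Pi.add_apply]
    exact ⟨hxy, by omega⟩
  rw [← heq] at hmem
  simp only [D, Finset.mem_filter, Finset.mem_univ, true_and] at hmem
  omega

/-- A potential whose gradient is dominated by that of an optimal `f` is optimal: otherwise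
`N • f - g` would violate the coarea inequality for large `N`. -/
lemma IsMinCut.isOptimal_of_dominated (hS : IsMinCut G s t S) {f g : V → ℤ}
    (hf : IsOptimal G s t S f) (hfg : ∀ x y, G.Adj x y → f x ≤ f y → g x ≤ g y) :
    IsOptimal G s t S g := by
  have hN : ∃ N : ℤ, ∀ x y, ((g y - g x).natAbs : ℤ) ≤ N := by
    refine ⟨∑ x, ∑ y, ((g y - g x).natAbs : ℤ), fun x y => ?_⟩
    calc ((g y - g x).natAbs : ℤ) ≤ ∑ y, ((g y - g x).natAbs : ℤ) :=
          Finset.single_le_sum (f := fun y => ((g y - g x).natAbs : ℤ))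
            (fun _ _ => Int.natCast_nonneg _) (Finset.mem_univ y)
      _ ≤ _ := Finset.single_le_sum (f := fun x => ∑ y, ((g y - g x).natAbs : ℤ))
            (fun _ _ => Finset.sum_nonneg fun _ _ => Int.natCast_nonneg _) (Finset.mem_univ x)
  obtain ⟨N, hN⟩ := hN
  have h0 : 0 ≤ N := (Int.natCast_nonneg _).trans (hN s s)
  have key : ∀ x y, G.Adj x y →
      (((N * f y - g y) - (N * f x - g x)).natAbs : ℤ) =
        N * ((f y - f x).natAbs : ℤ) - ((g y - g x).natAbs : ℤ) := by
    intro x y hxy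
    have h1 := hfg x y hxy
    have h2 := hfg y x hxy.symm
    have h3 := hN x y
    have hpos : ∀ a : ℤ, 1 ≤ a → N ≤ N * a := fun a ha => le_mul_of_one_le_right h0 ha
    rcases lt_trichotomy (f x) (f y) with h | h | h
    · have h4 := hpos (f y - f x) (by omega)
      rw [show ((f y - f x).natAbs : ℤ) = f y - f x by omega, mul_sub]
      rw [mul_sub] at h4
      omega
    · have : g x = g y := by omega
      simp [h, this]
    · have h4 := hpos (f x - f y) (by omega)
      rw [show ((f y - f x).natAbs : ℤ) = f x - f y by omega, mul_sub]
      rw [mul_sub] at h4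
      omega
  have hcost : gradCost G (fun x => N * f x - g x) = N * gradCost G f - gradCost G g := by
    unfold gradCost
    rw [Finset.mul_sum, ← Finset.sum_sub_distrib]
    exact Finset.sum_congr rfl fun d _ => key _ _ d.adj
  have h1 := hS.le_gradCost (fun x => N * f x - g x)
  rw [hcost] at h1
  unfold IsOptimal at *
  have h2 := mul_le_mul_of_nonneg_left hf h0
  linarith

/-- From every vertex, `t` can be reached along edges on which an optimal `f` does not decrease:
otherwise lowering `f` by one on the set of vertices that can be reached would decrease its
cost, as `G` is connected, but not `f t - f s`. -/
lemma IsMinCut.reflTransGen (hS : IsMinCut G s t S) (hconn : G.Connected) {f : V → ℤ}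
    (hf : IsOptimal G s t S f) (x : V) :
    Relation.ReflTransGen (fun x y => G.Adj x y ∧ f x ≤ f y) x t := by
  classical
  by_contra hx
  let A : Set V := {y | Relation.ReflTransGen (fun x y => G.Adj x y ∧ f x ≤ f y) x y}
  have hxA : x ∈ A := Relation.ReflTransGen.refl
  have htA : t ∉ A := hx
  have hout : ∀ u z, u ∈ A → z ∉ A → G.Adj u z → f z < f u := by
    intro u z hu hz huz
    by_contra hle
    exact hz (Relation.ReflTransGen.tail hu ⟨huz, not_lt.1 hle⟩)
  obtain ⟨p⟩ := hconn.preconnected x t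
  obtain ⟨d, -, hd1, hd2⟩ := p.exists_boundary_dart A hxA htA
  have hlt : gradCost G (fun x => f x - ind A x) < gradCost G f := by
    have hpt : ∀ e : G.Dart, (((f e.snd - ind A e.snd) - (f e.fst - ind A e.fst)).natAbs : ℤ) ≤
        ((f e.snd - f e.fst).natAbs : ℤ) := by
      intro e
      have h1 := hout e.fst e.snd
      have h2 := hout e.snd e.fst
      have h3 := e.adj
      simp only [ind]
      split_ifs with h4 h5 h5
      · omega
      · have := h2 h4 h5 h3.symm
        omega
      · have := h1 h5 h4 h3
        omega
      · omega
    refine Finset.sum_lt_sum (fun e _ => hpt e) ⟨d, Finset.mem_univ _, ?_⟩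
    have := hout _ _ hd1 hd2 d.adj
    simp only [ind, if_pos hd1, if_neg hd2]
    omega
  have h1 := hS.le_gradCost (fun x => f x - ind A x)
  have h2 : f t - f s ≤ (f t - ind A t) - (f s - ind A s) := by
    simp only [ind, if_neg htA]
    split_ifs <;> omega
  have h3 := mul_le_mul_of_nonneg_left h2 (gradCost_nonneg G (ind S))
  unfold IsOptimal at hf
  linarith

end Network

section Minimizers

variable {V : Type*} [Fintype V] {G : SimpleGraph V} {s t : V} {S : Set V}

lemma natAbs_le_cayleyDist {n : ℕ} (σ τ : Equiv.Perm (Fin n)) :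
    (((cayleyLength τ : ℤ) - cayleyLength σ).natAbs : ℤ) ≤ cayleyDist σ τ := by
  have h1 := cayleyLength_le_add σ τ
  have h2 := cayleyLength_le_add τ σ
  have h3 := cayleyDist_comm σ τ
  unfold cayleyDist at *
  omega

/-- If `f` is a generic optimal potential, then a labeling minimizes the Hamiltonian iff it is
monotone, for the absolute order, along the edges on which `f` does not decrease. -/
lemma IsMinCut.minimizer_iff (hS : IsMinCut G s t S) {f : V → ℤ} (hf : IsOptimal G s t S f)
    (hgen : ∀ g : V → ℤ, IsOptimal G s t S g → g s ≤ g t →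
      ∀ x y, G.Adj x y → f x ≤ f y → g x ≤ g y)
    {n : ℕ} {γ : Equiv.Perm (Fin n)}
    {α : V → Equiv.Perm (Fin n)} (hαs : α s = 1) (hαt : α t = γ) :
    (∀ β : V → Equiv.Perm (Fin n), β s = 1 → β t = γ → hamiltonian G α ≤ hamiltonian G β) ↔
      ∀ x y, G.Adj x y ∧ f x ≤ f y → AbsLe (α x) (α y) := by
  classical
  have hlower : ∀ β : V → Equiv.Perm (Fin n),
      gradCost G (fun x => (cayleyLength (β x) : ℤ)) ≤ 2 * (hamiltonian G β : ℤ) := by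
    intro β
    have := two_mul_hamiltonian G β
    zify at this
    rw [this]
    exact Finset.sum_le_sum fun d _ => natAbs_le_cayleyDist _ _
  have hcoarea : ∀ β : V → Equiv.Perm (Fin n), β s = 1 → β t = γ →
      gradCost G (ind S) * (cayleyLength γ : ℤ) ≤
        gradCost G (fun x => (cayleyLength (β x) : ℤ)) := by
    intro β h1 h2
    have := hS.le_gradCost (fun x => (cayleyLength (β x) : ℤ))
    simpa [h1, h2, cayleyLength_one] using this
  constructor
  · intro hmin x y ⟨hxy, hle⟩
    -- labeling the minimum cut by `γ` and the rest by `1` attains the coarea bound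
    have hcut : 2 * (hamiltonian G (fun x => if x ∈ S then γ else 1) : ℤ) =
        gradCost G (ind S) * (cayleyLength γ : ℤ) := by
      have := two_mul_hamiltonian G (fun x => if x ∈ S then γ else 1)
      zify at this
      rw [this, gradCost, Finset.sum_mul]
      refine Finset.sum_congr rfl fun d _ => ?_
      simp only [ind, cayleyDist]
      split_ifs <;> simp [cayleyLength_one, cayleyLength_inv]
    have hα := hmin (fun x => if x ∈ S then γ else 1) (by simp [hS.notMem]) (by simp [hS.mem])
    have h1 := hlower α
    have h2 := hcoarea α hαs hαt
    have hopt : IsOptimal G s t S (fun x => (cayleyLength (α x) : ℤ)) := by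
      simp only [IsOptimal, hαs, hαt, cayleyLength_one]
      push_cast
      rw [sub_zero]
      omega
    have hmono := hgen _ hopt (by simp [hαs, cayleyLength_one]) x y hxy hle
    have heq : ∑ d : G.Dart,
        (((cayleyLength (α d.snd) : ℤ) - cayleyLength (α d.fst)).natAbs : ℤ) =
        ∑ d : G.Dart, (cayleyDist (α d.fst) (α d.snd) : ℤ) := by
      have h3 := two_mul_hamiltonian G α
      zify at h3
      rw [← h3]
      change gradCost G (fun x => (cayleyLength (α x) : ℤ)) = _
      omega
    have h4 := (Finset.sum_eq_sum_iff_of_le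
      (fun d _ => natAbs_le_cayleyDist (α d.fst) (α d.snd))).1 heq ⟨(x, y), hxy⟩
      (Finset.mem_univ _)
    simp only [cayleyDist] at h4 hmono
    unfold AbsLe
    omega
  · intro hmono β hβs hβt
    have hdom := hS.isOptimal_of_dominated hf (g := fun x => (cayleyLength (α x) : ℤ))
      (fun x y hxy hle => by
        have := (hmono x y ⟨hxy, hle⟩).length_le
        simpa using this)
    have hα : 2 * (hamiltonian G α : ℤ) = gradCost G (fun x => (cayleyLength (α x) : ℤ)) := by
      have h3 := two_mul_hamiltonian G α
      zify at h3
      rw [h3]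
      refine Finset.sum_congr rfl fun d _ => ?_
      beta_reduce
      rcases le_total (f d.fst) (f d.snd) with h | h
      · have := hmono _ _ ⟨d.adj, h⟩
        unfold AbsLe at this
        unfold cayleyDist
        omega
      · have := hmono _ _ ⟨d.adj.symm, h⟩
        rw [cayleyDist_comm]
        unfold AbsLe at this
        unfold cayleyDist
        omega
    have h1 := hlower β
    have h2 := hcoarea β hβs hβt
    simp only [IsOptimal, hαs, hαt, cayleyLength_one] at hdom
    push_cast at hdom
    rw [sub_zero] at hdom
    omega

end Minimizers

open Relation in
/-- Labels of vertices that lie below `s` or above `t` are forced; the rest of a monotone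
labeling is a monotone labeling of the remaining vertices by permutations below `γ`. -/
lemma ncard_monotone_labelings {V : Type*} {s t : V}
    {R : V → V → Prop} (hR : ∀ x, ReflTransGen R x t)
    (hts : ¬ ReflTransGen R t s) {n : ℕ} (hn : 1 ≤ n) {γ : Equiv.Perm (Fin n)}
    (hγ : cycleCount γ = 1) :
    {α : V → Equiv.Perm (Fin n) | α s = 1 ∧ α t = γ ∧ ∀ x y, R x y → AbsLe (α x) (α y)}.ncard =
    {a : {x // ¬ ReflTransGen R x s ∧ ¬ ReflTransGen R t x} → Equiv.Perm (Fin n) |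
      (∀ x, AbsLe (a x) γ) ∧ ∀ x y, R x.1 y.1 → AbsLe (a x) (a y)}.ncard := by
  classical
  have hpath : ∀ α : V → Equiv.Perm (Fin n), (∀ x y, R x y → AbsLe (α x) (α y)) →
      ∀ x y, ReflTransGen R x y → AbsLe (α x) (α y) := by
    intro α hα x y h
    induction h with
    | refl => exact AbsLe.refl _
    | tail _ h ih => exact ih.trans (hα _ _ h)
  have hbot : ∀ α : V → Equiv.Perm (Fin n), α s = 1 → (∀ x y, R x y → AbsLe (α x) (α y)) →
      ∀ x, ReflTransGen R x s → α x = 1 := by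
    intro α h1 hα x hx
    have := hpath α hα x s hx
    rw [h1] at this
    exact this.antisymm (AbsLe.one_left _)
  have htop : ∀ α : V → Equiv.Perm (Fin n), α t = γ → (∀ x y, R x y → AbsLe (α x) (α y)) →
      ∀ x, ReflTransGen R t x → α x = γ := by
    intro α h1 hα x hx
    have := hpath α hα t x hx
    rw [h1] at this
    refine (this.eq_of_length_le ?_).symm
    have h2 := cayleyLength_add_cycleCount γ
    have h3 := cayleyLength_add_cycleCount (α x)
    have h4 := one_le_cycleCount hn (α x)
    omega
  refine Set.ncard_congr (fun α _ x => α x.1) ?_ ?_ ?_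
  · rintro α ⟨h1, h2, h3⟩
    refine ⟨fun x => ?_, fun x y h => h3 _ _ h⟩
    have := hpath α h3 x t (hR x)
    rwa [h2] at this
  · rintro α β ⟨h1, h2, h3⟩ ⟨h1', h2', h3'⟩ h
    funext x
    by_cases hx : ReflTransGen R x s
    · rw [hbot α h1 h3 x hx, hbot β h1' h3' x hx]
    · by_cases hx' : ReflTransGen R t x
      · rw [htop α h2 h3 x hx', htop β h2' h3' x hx']
      · exact congrFun h ⟨x, hx, hx'⟩
  · rintro a ⟨h1, h2⟩
    let α : V → Equiv.Perm (Fin n) := fun x =>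
      if hx : ReflTransGen R x s then 1
      else if hx' : ReflTransGen R t x then γ else a ⟨x, hx, hx'⟩
    have hα1 : ∀ x, ReflTransGen R x s → α x = 1 := fun x hx => dif_pos hx
    have hα2 : ∀ x, ReflTransGen R t x → α x = γ := fun x hx => by
      have : ¬ ReflTransGen R x s := fun h => hts (hx.trans h)
      simp only [α, dif_neg this, dif_pos hx]
    have hα3 : ∀ x (hx : ¬ ReflTransGen R x s ∧ ¬ ReflTransGen R t x), α x = a ⟨x, hx⟩ :=
      fun x hx => by simp only [α, dif_neg hx.1, dif_neg hx.2]
    have hle : ∀ x, AbsLe (α x) γ := by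
      intro x
      by_cases hx : ReflTransGen R x s
      · rw [hα1 x hx]
        exact AbsLe.one_left _
      · by_cases hx' : ReflTransGen R t x
        · rw [hα2 x hx']
          exact AbsLe.refl _
        · rw [hα3 x ⟨hx, hx'⟩]
          exact h1 _
    refine ⟨α, ⟨hα1 s .refl, hα2 t .refl, fun x y h => ?_⟩, ?_⟩
    · by_cases hx : ReflTransGen R x s
      · rw [hα1 x hx]
        exact AbsLe.one_left _
      · by_cases hy : ReflTransGen R t y
        · rw [hα2 y hy]
          exact hle x
        · have hx' : ¬ ReflTransGen R t x := fun h' => hy (h'.tail h)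
          have hy' : ¬ ReflTransGen R y s := fun h' => hx (h'.head h)
          rw [hα3 x ⟨hx, hx'⟩, hα3 y ⟨hy', hy⟩]
          exact h2 _ _ h
    · funext x
      exact hα3 x.1 x.2

open MeasureTheory in
/-- For a connected network, the numbers `m_n` of labelings attaining the minimum of the
Hamiltonian `H_G^{(n)}` are the moments of a probability measure on `ℝ` supported on a
compact subset of `[0, ∞)`. -/
theorem minimizer_counts_are_moments {V : Type*} [Fintype V] (G : SimpleGraph V)
    (hconn : G.Connected) (s t : V) (hst : s ≠ t)
    (γ : ∀ n : ℕ, Equiv.Perm (Fin n)) (hγ : ∀ n : ℕ, 1 ≤ n → cycleCount (γ n) = 1) :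
    ∃ μ : Measure ℝ, IsProbabilityMeasure μ ∧
      (∃ K : Set ℝ, IsCompact K ∧ K ⊆ Set.Ici 0 ∧ μ Kᶜ = 0) ∧
      ∀ n : ℕ, 1 ≤ n →
        ∫ x, x ^ n ∂μ =
          ({α : V → Equiv.Perm (Fin n) | α s = 1 ∧ α t = γ n ∧
            ∀ β : V → Equiv.Perm (Fin n), β s = 1 → β t = γ n →
              hamiltonian G α ≤ hamiltonian G β}.ncard : ℝ) := by
  classical
  obtain ⟨S, hS⟩ := exists_isMinCut G hst
  obtain ⟨f, hf, hfst, hgen⟩ := hS.exists_generic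
  let R : V → V → Prop := fun x y => G.Adj x y ∧ f x ≤ f y
  have hts : ¬ Relation.ReflTransGen R t s := by
    intro h
    have hmono : ∀ x y, Relation.ReflTransGen R x y → f x ≤ f y := by
      intro x y h
      induction h with
      | refl => exact le_rfl
      | tail _ h ih => exact ih.trans h.2
    exact absurd (hmono t s h) (not_le.2 hfst)
  let U := {x // ¬ Relation.ReflTransGen R x s ∧ ¬ Relation.ReflTransGen R t x}
  let RU : U → U → Prop := fun x y => R x.1 y.1
  obtain ⟨μ, hμ, hsupp, hmom⟩ := walk_moments (PState.nb RU)
    (fun σ τ h => by rw [PState.mem_nb] at h ⊢; exact h.symm)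
    (fun _ => 0, fun _ _ _ => 0) (2 ^ Fintype.card U) PState.card_nb
  refine ⟨μ, hμ, ⟨_, isCompact_Icc, fun x hx => hx.1, hsupp⟩, fun n hn => ?_⟩
  rw [hmom n, ← ncard_absLe RU hn (hγ n hn),
    ← ncard_monotone_labelings (hS.reflTransGen hconn hf) hts hn (hγ n hn)]
  congr 2
  ext α
  constructor
  · rintro ⟨h1, h2, h3⟩
    exact ⟨h1, h2, (hS.minimizer_iff hf hgen h1 h2).2 h3⟩
  · rintro ⟨h1, h2, h3⟩
    exact ⟨h1, h2, (hS.minimizer_iff hf hgen h1 h2).1 h3⟩
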